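/- Let T > 0, let a : ℝ → ℝ be T-periodic and locally integrable satisfying condition (a*) with intervals I⁺_1, …, I⁺_m, and for μ > 0 set a_μ(t) = a⁺(t) − μ a⁻(t). Let g ∈ C¹([0,∞)) satisfy (g*) and (gs). Set J⁺_{i,ℓ} = I⁺_i + ℓT for i = 1, …, m and ℓ ∈ ℤ. Then there exist constants r, R with 0 < r < R and μ* > 0 such that, for every μ > μ*, every integer k ≥ 2, and every km-tuple S = (s_1, …, s_{km}) ∈ {0,1}^{km} with S ≠ (0, …, 0), there exists a positive kT-periodic solution u of u'' + a_μ(t) g(u) = 0 such that, for all i = 1, …, m and ℓ = 0, …, k−1 with j = i + ℓm: max over J⁺_{i,ℓ} of u is < r if s_j = 0, and r < max over J⁺_{i,ℓ} of u < R if s_j = 1. In particular, for all μ > μ* and all k ≥ 2, the equation u'' + a_μ(t) g(u) = 0 has at least 2^{km} − 1 distinct positive kT-periodic solutions. -/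

import Mathlib

/-!
Shooting in the phase plane. Let `s n` be the time at which the negative mass of `a` preceding the
`n`-th positive hump is exhausted, and truncate `g` to a globally Lipschitz function that vanishes
on `(-∞, 0]`, so that Poincaré maps exist. A window of phase points `(u, u') (s n)` with `0 ≤ u ≤ ε`
is attached to each symbol: large slopes `Y ≤ u' ≤ Ymax` for the symbol `1`, and
`-Y ≤ u' ≤ ε / T` for the symbol `0`. At every window the Poincaré map to the next shooting time
sends one of the two horizontal edges above and the other below every window. Indeed, started with
slope `ε / T` or `Y` the solution is still increasing at the end of the hump, and a large `μ` then
drives its slope beyond `Ymax`; started with slope `Ymax` it is, by superlinearity at infinity,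
brought to zero within the hump, below which the equation is linear, so that it goes on decreasing
with a steep slope, and so does a solution started with slope `-Y`. For large `μ` the position is in
turn forced below `ε` at the next shooting time. By the Poincaré-Miranda theorem every periodic
sequence of windows is therefore visited by a periodic orbit; its position stays positive because a
solution reaching zero would decrease forever. On the humps it is bounded by concavity and
superlinearity, on the rest of the period by convexity, so it does not feel the truncation.
-/

open MeasureTheory Set Filter

/-- `u` is a solution of `u'' + F(t,u) = 0`: `u` is of class `C¹` and its derivative `u'`
is locally absolutely continuous (it is the integral of a locally integrable function),
with `u'' + F(t, u(t)) = 0` for a.e. `t`. -/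
def IsSol (F : ℝ → ℝ → ℝ) (u : ℝ → ℝ) : Prop :=
  ∃ u' : ℝ → ℝ,
    (∀ t, HasDerivAt u (u' t) t) ∧
    MeasureTheory.LocallyIntegrable (fun s => F s (u s)) MeasureTheory.volume ∧
    ∀ t, u' t = u' 0 - ∫ s in (0:ℝ)..t, F s (u s)

/-- `q ≻ 0` on `I` : `q ≥ 0` a.e. on `I` and `q ≢ 0` on `I`. -/
def PosOn (q : ℝ → ℝ) (I : Set ℝ) : Prop :=
  (∀ᵐ t ∂(MeasureTheory.volume.restrict I), 0 ≤ q t) ∧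
  ¬ (∀ᵐ t ∂(MeasureTheory.volume.restrict I), q t = 0)

/-- Condition `(q*)`: `[0,T]` splits into `m` closed intervals where `q ≻ 0`
separated by `m` closed intervals where `q ≺ 0`. -/
def SignCond (q : ℝ → ℝ) (T : ℝ) (m : ℕ) : Prop :=
  ∃ σ : ℕ → ℝ, σ 0 = 0 ∧ σ (2*m) = T ∧ (∀ i < 2*m, σ i < σ (i+1)) ∧
    (∀ i < m, PosOn q (Set.Icc (σ (2*i)) (σ (2*i+1)))) ∧
    (∀ i < m, PosOn (fun t => - q t) (Set.Icc (σ (2*i+1)) (σ (2*i+2))))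

/-- A subharmonic solution of order `k`: `kT`-periodic but not `ℓT`-periodic
for `ℓ = 1, …, k-1`. -/
def IsSubharmonic (u : ℝ → ℝ) (T : ℝ) (k : ℕ) : Prop :=
  Function.Periodic u (k * T) ∧ ∀ ℓ : ℕ, 1 ≤ ℓ → ℓ < k → ¬ Function.Periodic u (ℓ * T)

/-- `u` and `v` belong to the same periodicity class. -/
def SameClass (u v : ℝ → ℝ) (T : ℝ) : Prop :=
  ∃ ℓ : ℤ, ∀ t, v t = u (t + ℓ * T)

section CubicalCochain

variable {ι : Type*} [DecidableEq ι]

/-- The mod 2 cubical cochains of the grid `ℕ^ι`: `ω S q` is the value of `ω` at the cube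
`∏_{i ∈ S} [q i, q i + 1] × ∏_{i ∉ S} {q i}`. -/
abbrev CubicalCochain (ι : Type*) : Type _ := Finset ι → (ι → ℕ) → ZMod 2

/-- The coboundary of a cubical cochain: the sum of its values at the faces of a cube. -/
def coboundary (ω : CubicalCochain ι) : CubicalCochain ι := fun S q =>
  ∑ i ∈ S, (ω (S.erase i) (q + Pi.single i 1) + ω (S.erase i) q)

/-- The cup product `δf ∪ ω` of the coboundary of a function on the vertices with a cubical
cochain. -/
def coboundaryCup (f : (ι → ℕ) → ZMod 2) (ω : CubicalCochain ι) : CubicalCochain ι := fun S q =>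
  ∑ i ∈ S, (f (q + Pi.single i 1) + f q) * ω (S.erase i) (q + Pi.single i 1)

/-- The cup product `δf_{i₁} ∪ ⋯ ∪ δf_{iₙ}` for the list `[i₁, …, iₙ]`. -/
def iteratedCup (f : ι → (ι → ℕ) → ZMod 2) : List ι → CubicalCochain ι
  | [] => fun S _ => if S = ∅ then 1 else 0
  | i :: l => coboundaryCup (f i) (iteratedCup f l)

lemma coboundary_mul (f : (ι → ℕ) → ZMod 2) (ω : CubicalCochain ι) :
    coboundary (fun S q => f q * ω S q) =
      fun S q => coboundaryCup f ω S q + f q * coboundary ω S q := by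
  funext S q
  simp only [coboundary, coboundaryCup, Finset.mul_sum, ← Finset.sum_add_distrib]
  refine Finset.sum_congr rfl fun i _ => ?_
  linear_combination -CharTwo.add_self_eq_zero (f q * ω (S.erase i) (q + Pi.single i 1))

lemma coboundary_coboundary (ω : CubicalCochain ι) : coboundary (coboundary ω) = 0 := by
  funext S q
  simp only [coboundary, ← Finset.sum_add_distrib, Finset.sum_sigma']
  -- The codimension two face obtained by deleting `i` and `j` occurs once for each order.
  refine Finset.sum_involution (fun x _ => ⟨x.2, x.1⟩) ?_ ?_ ?_ fun _ _ => rfl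
  · rintro ⟨i, j⟩ -
    rw [Finset.erase_right_comm (a := j), add_right_comm q (Pi.single j 1)]
    linear_combination
      CharTwo.add_self_eq_zero (ω ((S.erase i).erase j) (q + Pi.single i 1 + Pi.single j 1)) +
      CharTwo.add_self_eq_zero (ω ((S.erase i).erase j) (q + Pi.single i 1)) +
      CharTwo.add_self_eq_zero (ω ((S.erase i).erase j) (q + Pi.single j 1)) +
      CharTwo.add_self_eq_zero (ω ((S.erase i).erase j) q)
  · rintro ⟨i, j⟩ hij - heq
    simp only [Finset.mem_sigma, Finset.mem_erase] at hij
    exact hij.2.1 (congrArg Sigma.fst heq)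
  · rintro ⟨i, j⟩ hij
    simp only [Finset.mem_sigma, Finset.mem_erase] at hij ⊢
    exact ⟨hij.2.2, hij.2.1.symm, hij.1⟩

lemma coboundaryCup_eq_coboundary (f : (ι → ℕ) → ZMod 2) {ω : CubicalCochain ι}
    (hω : coboundary ω = 0) : coboundaryCup f ω = coboundary fun S q => f q * ω S q := by
  simp [coboundary_mul, hω]

lemma coboundary_iteratedCup (f : ι → (ι → ℕ) → ZMod 2) (l : List ι) :
    coboundary (iteratedCup f l) = 0 := by
  induction l with
  | nil => funext S q; exact Finset.sum_eq_zero fun i _ => CharTwo.add_self_eq_zero _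
  | cons i l ih => rw [iteratedCup, coboundaryCup_eq_coboundary _ ih, coboundary_coboundary]

lemma iteratedCup_eq_zero_of_const {f : ι → (ι → ℕ) → ZMod 2} {j : ι} {c : ℕ} {v : ZMod 2}
    (hf : ∀ q, q j = c → f j q = v) {l : List ι} (hjl : j ∈ l) {S : Finset ι} (hjS : j ∉ S)
    {q : ι → ℕ} (hq : q j = c) : iteratedCup f l S q = 0 := by
  induction l generalizing S q with
  | nil => simp at hjl
  | cons i l ih =>
    refine Finset.sum_eq_zero fun k hk => ?_
    have hjk : j ≠ k := fun h => hjS (h ▸ hk)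
    have hstep : (q + Pi.single k 1 : ι → ℕ) j = c := by simp [hq, hjk]
    rcases List.mem_cons.1 hjl with rfl | hjl
    · rw [hf _ hstep, hf _ hq, CharTwo.add_self_eq_zero, zero_mul]
    · rw [ih hjl (fun h => hjS (Finset.mem_of_mem_erase h)) hstep, mul_zero]

lemma exists_ne_of_iteratedCup_ne_zero {f : ι → (ι → ℕ) → ZMod 2} {l : List ι} {S : Finset ι}
    {q : ι → ℕ} (h : iteratedCup f l S q ≠ 0) {i : ι} (hi : i ∈ l) :
    ∃ r ∈ Icc q (q + 1), ∃ s ∈ Icc q (q + 1), f i r ≠ f i s := by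
  -- The sharper cube spanned by `S` makes the induction go through.
  suffices ∃ r ∈ Icc q (q + ∑ k ∈ S, Pi.single k 1),
      ∃ s ∈ Icc q (q + ∑ k ∈ S, Pi.single k 1), f i r ≠ f i s by
    have hle : q + ∑ k ∈ S, Pi.single k 1 ≤ q + 1 := by
      refine add_le_add_right (fun j => ?_) q
      simp only [Finset.sum_apply, Pi.single_apply, Finset.sum_ite_eq, Pi.one_apply]
      split_ifs <;> simp
    obtain ⟨r, hr, s, hs, hne⟩ := this
    exact ⟨r, Icc_subset_Icc_right hle hr, s, Icc_subset_Icc_right hle hs, hne⟩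
  induction l generalizing S q with
  | nil => simp at hi
  | cons j l ih =>
    obtain ⟨k, hk, hne⟩ := Finset.exists_ne_zero_of_sum_ne_zero h
    have hsplit : q + ∑ k ∈ S, Pi.single k 1 =
        q + Pi.single k 1 + ∑ k ∈ S.erase k, Pi.single k 1 := by
      rw [← Finset.add_sum_erase S _ hk, add_assoc]
    rw [hsplit]
    rcases List.mem_cons.1 hi with rfl | hi
    · refine ⟨q + Pi.single k 1, ⟨le_self_add, le_self_add⟩, q,
        ⟨le_rfl, le_self_add.trans le_self_add⟩, fun heq => left_ne_zero_of_mul hne ?_⟩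
      rw [heq, CharTwo.add_self_eq_zero]
    · obtain ⟨r, hr, s, hs, hrs⟩ := ih (right_ne_zero_of_mul hne) hi
      exact ⟨r, Icc_subset_Icc_left le_self_add hr, s, Icc_subset_Icc_left le_self_add hs, hrs⟩

variable [Fintype ι]

/-- The lower vertices of the unit cubes spanned by the directions in `S` that make up the face
`∏_{i ∈ S} [0, p] × ∏_{i ∉ S} {x i}` of a grid. -/
def gridFace (p : ℕ) (S : Finset ι) (x : ι → ℕ) : Finset (ι → ℕ) :=
  Fintype.piFinset fun i => if i ∈ S then Finset.range p else {x i}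

lemma mem_gridFace {p : ℕ} {S : Finset ι} {x q : ι → ℕ} :
    q ∈ gridFace p S x ↔ ∀ i, if i ∈ S then q i < p else q i = x i := by
  simp only [gridFace, Fintype.mem_piFinset]
  refine forall_congr' fun i => ?_
  split_ifs <;> simp

lemma eq_of_mem_gridFace {p : ℕ} {S : Finset ι} {x q : ι → ℕ} (hq : q ∈ gridFace p S x) {i : ι}
    (hi : i ∉ S) : q i = x i := by
  simpa [hi] using mem_gridFace.1 hq i

lemma sum_gridFace_insert {M : Type*} [AddCommMonoid M] {p : ℕ} {S : Finset ι} {j : ι}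
    (hj : j ∉ S) (F : (ι → ℕ) → M) (x : ι → ℕ) :
    ∑ q ∈ gridFace p (insert j S) x, F q =
      ∑ t ∈ Finset.range p, ∑ q ∈ gridFace p S (Function.update x j t), F q := by
  rw [← Finset.sum_fiberwise_of_maps_to (t := Finset.range p) (g := fun q => q j)
    fun q hq => by simpa using mem_gridFace.1 hq j]
  refine Finset.sum_congr rfl fun t ht => Finset.sum_congr ?_ fun _ _ => rfl
  ext q
  simp only [Finset.mem_filter, mem_gridFace, Finset.mem_insert]
  constructor
  · rintro ⟨hq, rfl⟩ i
    rcases eq_or_ne i j with rfl | hij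
    · simp [hj]
    · simpa [hij] using hq i
  · intro hq
    have hqj : q j = t := by simpa [hj] using hq j
    refine ⟨fun i => ?_, hqj⟩
    rcases eq_or_ne i j with rfl | hij
    · simpa [hqj] using ht
    · simpa [hij] using hq i

lemma sum_gridFace_add_single {M : Type*} [AddCommMonoid M] {p : ℕ} {S : Finset ι} {j : ι}
    (hj : j ∉ S) (F : (ι → ℕ) → M) (x : ι → ℕ) :
    ∑ q ∈ gridFace p S x, F (q + Pi.single j 1) =
      ∑ q ∈ gridFace p S (x + Pi.single j 1), F q := by
  refine Finset.sum_nbij' (· + Pi.single j 1) (· - Pi.single j 1) (fun q hq => ?_)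
    (fun q hq => ?_) (fun q _ => add_tsub_cancel_right _ _) (fun q hq => ?_) fun q _ => rfl
  · refine mem_gridFace.2 fun i => ?_
    have := mem_gridFace.1 hq i
    rcases eq_or_ne i j with rfl | hij
    · simpa [hj] using this
    · simpa [hij] using this
  · refine mem_gridFace.2 fun i => ?_
    have := mem_gridFace.1 hq i
    rcases eq_or_ne i j with rfl | hij
    · simp only [hj, if_false, Pi.add_apply, Pi.single_eq_same, Pi.sub_apply] at this ⊢
      omega
    · simpa [hij] using this
  · refine tsub_add_cancel_of_le fun i => ?_
    rcases eq_or_ne i j with rfl | hij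
    · simp [eq_of_mem_gridFace hq hj]
    · simp [hij]

lemma sum_gridFace_telescope {M : Type*} [AddCommGroup M] {p : ℕ} {S : Finset ι} {j : ι}
    (hj : j ∉ S) (F : (ι → ℕ) → M) (x : ι → ℕ) :
    ∑ q ∈ gridFace p (insert j S) x, (F (q + Pi.single j 1) - F q) =
      ∑ q ∈ gridFace p S (Function.update x j p), F q -
        ∑ q ∈ gridFace p S (Function.update x j 0), F q := by
  rw [sum_gridFace_insert hj,
    ← Finset.sum_range_sub fun t => ∑ q ∈ gridFace p S (Function.update x j t), F q]
  refine Finset.sum_congr rfl fun t _ => ?_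
  have hstep : Function.update x j t + Pi.single j 1 = Function.update x j (t + 1) := by
    funext i
    rcases eq_or_ne i j with rfl | hij <;> simp [*]
  rw [Finset.sum_sub_distrib, sum_gridFace_add_single hj, hstep]

theorem sum_gridFace_coboundary (p : ℕ) (S : Finset ι) (ω : CubicalCochain ι) (x : ι → ℕ) :
    ∑ q ∈ gridFace p S x, coboundary ω S q =
      ∑ j ∈ S, (∑ q ∈ gridFace p (S.erase j) (Function.update x j p), ω (S.erase j) q +
        ∑ q ∈ gridFace p (S.erase j) (Function.update x j 0), ω (S.erase j) q) := by
  simp only [coboundary]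
  rw [Finset.sum_comm]
  refine Finset.sum_congr rfl fun j hj => ?_
  simpa only [CharTwo.sub_eq_add, Finset.insert_erase hj] using
    sum_gridFace_telescope (p := p) (Finset.notMem_erase j S) (ω (S.erase j)) x

lemma sum_gridFace_iteratedCup {p : ℕ} {f : ι → (ι → ℕ) → ZMod 2}
    (hf₀ : ∀ i q, q i = 0 → f i q = 0) (hfp : ∀ i q, q i = p → f i q = 1) {l : List ι}
    (hl : l.Nodup) (x : ι → ℕ) :
    ∑ q ∈ gridFace p l.toFinset x, iteratedCup f l l.toFinset q = 1 := by
  induction l generalizing x with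
  | nil =>
    have : gridFace p ∅ x = {x} := by
      ext q
      simp [mem_gridFace, funext_iff]
    simp [iteratedCup, this]
  | cons i l ih =>
    obtain ⟨hil, hl⟩ := List.nodup_cons.1 hl
    rw [iteratedCup, coboundaryCup_eq_coboundary _ (coboundary_iteratedCup f l),
      sum_gridFace_coboundary, List.toFinset_cons,
      Finset.sum_insert (by simpa using hil), Finset.erase_insert (by simpa using hil),
      Finset.sum_eq_zero (s := l.toFinset) fun j hj => ?_, add_zero]
    · have hval {t : ℕ} {v : ZMod 2} (hv : ∀ q, q i = t → f i q = v) :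
          ∑ q ∈ gridFace p l.toFinset (Function.update x i t),
            f i q * iteratedCup f l l.toFinset q = v := by
        rw [Finset.sum_congr rfl fun q hq => by
          rw [hv q (by rw [eq_of_mem_gridFace hq (by simpa using hil), Function.update_self])],
          ← Finset.mul_sum, ih hl, mul_one]
      rw [hval (hfp i), hval (hf₀ i), add_zero]
    · have hzero {t : ℕ} {v : ZMod 2} (hv : ∀ q, q j = t → f j q = v) :
          ∑ q ∈ gridFace p ((insert i l.toFinset).erase j) (Function.update x j t),
            f i q * iteratedCup f l ((insert i l.toFinset).erase j) q = 0 :=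
        Finset.sum_eq_zero fun q hq => by
          rw [iteratedCup_eq_zero_of_const hv (by simpa using hj) (Finset.notMem_erase j _)
            (by rw [eq_of_mem_gridFace hq (Finset.notMem_erase j _), Function.update_self]),
            mul_zero]
      rw [hzero (hfp j), hzero (hf₀ j), add_zero]

end CubicalCochain

theorem exists_grid_cube_forall_ne {ι : Type*} [Finite ι] {p : ℕ} {f : ι → (ι → ℕ) → ZMod 2}
    (hf₀ : ∀ i q, q i = 0 → f i q = 0) (hfp : ∀ i q, q i = p → f i q = 1) :
    ∃ q : ι → ℕ, (∀ i, q i < p) ∧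
      ∀ i, ∃ r ∈ Icc q (q + 1), ∃ s ∈ Icc q (q + 1), f i r = 0 ∧ f i s = 1 := by
  classical
  have := Fintype.ofFinite ι
  have hsum := sum_gridFace_iteratedCup hf₀ hfp (Finset.nodup_toList Finset.univ) 0
  obtain ⟨q, hq, hne⟩ := Finset.exists_ne_zero_of_sum_ne_zero (hsum.trans_ne one_ne_zero)
  rw [Finset.toList_toFinset] at hq
  refine ⟨q, fun i => by simpa using mem_gridFace.1 hq i, fun i => ?_⟩
  obtain ⟨r, hr, s, hs, hrs⟩ := exists_ne_of_iteratedCup_ne_zero hne (i := i) (by simp)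
  have hbit : ∀ v w : ZMod 2, v ≠ w → v = 0 ∧ w = 1 ∨ w = 0 ∧ v = 1 := by decide
  rcases hbit _ _ hrs with h | h
  exacts [⟨r, hr, s, hs, h⟩, ⟨s, hs, r, hr, h⟩]

section PoincareMiranda

variable {ι : Type*}

/-- The point of the box `[a, b]` with multi-index `q` in the grid that divides every edge into
`n` equal parts. -/
noncomputable def gridPoint (a b : ι → ℝ) (n : ℕ) (q : ι → ℕ) : ι → ℝ := fun i =>
  a i + q i / n * (b i - a i)

lemma gridPoint_mem_Icc {a b : ι → ℝ} (hab : a ≤ b) {n : ℕ} {q : ι → ℕ} (hq : ∀ i, q i ≤ n) :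
    gridPoint a b n q ∈ Icc a b := by
  have hfrac (i : ι) : (q i : ℝ) / n ∈ Icc (0 : ℝ) 1 :=
    ⟨by positivity, div_le_one_of_le₀ (by exact_mod_cast hq i) (by positivity)⟩
  have hlen (i : ι) : 0 ≤ b i - a i := sub_nonneg.2 (hab i)
  refine ⟨fun i => ?_, fun i => ?_⟩
  · simpa only [gridPoint, le_add_iff_nonneg_right] using mul_nonneg (hfrac i).1 (hlen i)
  · simp only [gridPoint]
    linarith [mul_le_of_le_one_left (hlen i) (hfrac i).2]

lemma dist_gridPoint_le [Fintype ι] (a b : ι → ℝ) (n : ℕ) {q r : ι → ℕ} (hr : r ∈ Icc q (q + 1)) :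
    dist (gridPoint a b n r) (gridPoint a b n q) ≤ dist a b / n := by
  refine (dist_pi_le_iff (by positivity)).2 fun i => ?_
  have hdiff : |(r i : ℝ) - q i| ≤ 1 := by
    have h₁ : (q i : ℝ) ≤ r i := by exact_mod_cast hr.1 i
    have h₂ : (r i : ℝ) ≤ q i + 1 := by exact_mod_cast hr.2 i
    exact abs_le.2 ⟨by linarith, by linarith⟩
  calc dist (gridPoint a b n r i) (gridPoint a b n q i)
      = |(r i : ℝ) - q i| * dist (b i) (a i) / n := by
        rw [Real.dist_eq, Real.dist_eq, gridPoint, gridPoint, add_sub_add_left_eq_sub,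
          ← sub_mul, ← sub_div, abs_mul, abs_div, Nat.abs_cast, div_mul_eq_mul_div]
    _ ≤ 1 * dist a b / n := by
        rw [dist_comm a b]
        gcongr
        exact dist_le_pi_dist b a i
    _ = dist a b / n := by rw [one_mul]

lemma exists_approx_zero_of_faces [Fintype ι] {a b : ι → ℝ} (hab : a ≤ b)
    {F : (ι → ℝ) → ι → ℝ}
    (ha : ∀ x ∈ Icc a b, ∀ i, x i = a i → F x i ≤ 0)
    (hb : ∀ x ∈ Icc a b, ∀ i, x i = b i → 0 ≤ F x i) {n : ℕ} (hn : n ≠ 0) :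
    ∃ z ∈ Icc a b, ∀ i, (∃ r ∈ Icc a b, dist r z ≤ dist a b / n ∧ F r i ≤ 0) ∧
      ∃ s ∈ Icc a b, dist s z ≤ dist a b / n ∧ 0 ≤ F s i := by
  classical
  let label (i : ι) (q : ι → ℕ) : ZMod 2 :=
    if q i = 0 then 0 else if q i = n then 1 else if 0 < F (gridPoint a b n q) i then 1 else 0
  obtain ⟨q, hq, hlabel⟩ := exists_grid_cube_forall_ne (f := label) (p := n)
    (fun i q h => by simp [label, h]) (fun i q h => by simp [label, h, hn])
  have hmem {r : ι → ℕ} (hr : r ∈ Icc q (q + 1)) : gridPoint a b n r ∈ Icc a b :=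
    gridPoint_mem_Icc hab fun i => (hr.2 i).trans (hq i)
  refine ⟨gridPoint a b n q, gridPoint_mem_Icc hab fun i => (hq i).le, fun i => ?_⟩
  obtain ⟨r, hr, s, hs, hr0, hs1⟩ := hlabel i
  refine ⟨⟨_, hmem hr, dist_gridPoint_le a b n hr, ?_⟩, _, hmem hs, dist_gridPoint_le a b n hs, ?_⟩
  · by_cases h₀ : r i = 0
    · exact ha _ (hmem hr) i (by simp [gridPoint, h₀])
    · have hrn : r i ≠ n := fun h => by simp [label, h, hn] at hr0
      simpa [label, h₀, hrn] using hr0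
  · have h₀ : s i ≠ 0 := fun h => by simp [label, h] at hs1
    by_cases hsn : s i = n
    · exact hb _ (hmem hs) i (by simp [gridPoint, hsn, hn])
    · have : 0 < F (gridPoint a b n s) i := by simpa [label, h₀, hsn] using hs1
      exact this.le

theorem poincare_miranda [Finite ι] {a b : ι → ℝ} (hab : a ≤ b) {F : (ι → ℝ) → ι → ℝ}
    (hF : ContinuousOn F (Icc a b)) (ha : ∀ x ∈ Icc a b, ∀ i, x i = a i → F x i ≤ 0)
    (hb : ∀ x ∈ Icc a b, ∀ i, x i = b i → 0 ≤ F x i) : ∃ x ∈ Icc a b, F x = 0 := by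
  have := Fintype.ofFinite ι
  choose z hz hrs using fun n : ℕ => exists_approx_zero_of_faces hab ha hb n.succ_ne_zero
  obtain ⟨x, hx, φ, hφ, hlim⟩ := isCompact_Icc.tendsto_subseq hz
  have hmesh : Tendsto (fun n => dist a b / (φ n + 1 : ℕ)) atTop (nhds 0) :=
    (tendsto_const_div_atTop_nhds_zero_nat _).comp
      ((tendsto_add_atTop_nat 1).comp hφ.tendsto_atTop)
  have hF_lim {t : ℕ → ι → ℝ} (ht : ∀ n, t n ∈ Icc a b)
      (hdist : ∀ n, dist (t n) (z n) ≤ dist a b / (n + 1 : ℕ)) (i : ι) :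
      Tendsto (fun n => F (t (φ n)) i) atTop (nhds (F x i)) := by
    have htx : Tendsto (t ∘ φ) atTop (nhds x) :=
      hlim.congr_dist (squeeze_zero (fun _ => dist_nonneg)
        (fun n => (dist_comm _ _).trans_le (hdist (φ n))) hmesh)
    exact tendsto_pi_nhds.1 ((hF x hx).tendsto.comp
      (tendsto_nhdsWithin_iff.2 ⟨htx, Eventually.of_forall fun n => ht (φ n)⟩)) i
  refine ⟨x, hx, funext fun i => le_antisymm ?_ ?_⟩
  · choose r hr hrz hFr using fun n => (hrs n i).1
    exact le_of_tendsto' (hF_lim hr hrz i) fun n => hFr (φ n)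
  · choose s hs hsz hFs using fun n => (hrs n i).2
    exact ge_of_tendsto' (hF_lim hs hsz i) fun n => hFs (φ n)

end PoincareMiranda

section Covering

/-- The planar map `φ` stretches the rectangle `[a, b]` across the rectangle `[a', b']` along the
second coordinate: it maps the two horizontal edges of the first beyond opposite horizontal edges
of the second. Nothing is required of the first coordinate. -/
def StretchesAcross (φ : ℝ × ℝ → ℝ × ℝ) (a b a' b' : ℝ × ℝ) : Prop :=
  (∀ p ∈ Icc a b, (p.2 = a.2 → (φ p).2 ≤ a'.2) ∧ (p.2 = b.2 → b'.2 ≤ (φ p).2)) ∨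
    ∀ p ∈ Icc a b, (p.2 = a.2 → b'.2 ≤ (φ p).2) ∧ (p.2 = b.2 → (φ p).2 ≤ a'.2)

lemma StretchesAcross.exists_orientation {φ : ℝ × ℝ → ℝ × ℝ} {a b a' b' : ℝ × ℝ}
    (h : StretchesAcross φ a b a' b') :
    ∃ s : ℝ, s ≠ 0 ∧ ∀ p ∈ Icc a b, ∀ y ∈ Icc a'.2 b'.2,
      (p.2 = a.2 → s * ((φ p).2 - y) ≤ 0) ∧ (p.2 = b.2 → 0 ≤ s * ((φ p).2 - y)) := by
  rcases h with h | h
  · exact ⟨1, one_ne_zero, fun p hp y hy => ⟨fun hpa => by linarith [(h p hp).1 hpa, hy.1],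
      fun hpb => by linarith [(h p hp).2 hpb, hy.2]⟩⟩
  · exact ⟨-1, by norm_num, fun p hp y hy => ⟨fun hpa => by linarith [(h p hp).1 hpa, hy.2],
      fun hpb => by linarith [(h p hp).2 hpb, hy.1]⟩⟩

theorem exists_orbit_of_stretchesAcross {ι : Type*} [Finite ι] (π : Equiv.Perm ι)
    {φ : ι → ℝ × ℝ → ℝ × ℝ} {a b : ι → ℝ × ℝ} (hab : a ≤ b)
    (hφ : ∀ i, ContinuousOn (φ i) (Icc (a i) (b i)))
    (hstr : ∀ i, StretchesAcross (φ i) (a i) (b i) (a (π i)) (b (π i))) :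
    ∃ p ∈ Icc a b, ∀ i, (p (π i)).2 = (φ i (p i)).2 ∧
      (p (π i)).1 = max (a (π i)).1 (min (b (π i)).1 (φ i (p i)).1) := by
  choose s hs0 hs using fun i => (hstr i).exists_orientation
  let pt (z : ι ⊕ ι → ℝ) (i : ι) : ℝ × ℝ := (z (.inl i), z (.inr i))
  let lo : ι ⊕ ι → ℝ := Sum.elim (fun i => (a i).1) fun i => (a i).2
  let hi : ι ⊕ ι → ℝ := Sum.elim (fun i => (b i).1) fun i => (b i).2
  let clamp (i : ι) (t : ℝ) : ℝ := max (a i).1 (min (b i).1 t)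
  let F (z : ι ⊕ ι → ℝ) : ι ⊕ ι → ℝ :=
    Sum.elim (fun i => z (.inl i) - clamp i (φ (π.symm i) (pt z (π.symm i))).1)
      fun i => s i * ((φ i (pt z i)).2 - z (.inr (π i)))
  have hpt {z : ι ⊕ ι → ℝ} (hz : z ∈ Icc lo hi) (i : ι) : pt z i ∈ Icc (a i) (b i) :=
    ⟨⟨hz.1 (.inl i), hz.1 (.inr i)⟩, hz.2 (.inl i), hz.2 (.inr i)⟩
  have hφpt (i : ι) : ContinuousOn (fun z => φ i (pt z i)) (Icc lo hi) :=
    (hφ i).comp (by fun_prop) fun z hz => hpt hz i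
  have hF : ContinuousOn F (Icc lo hi) := continuousOn_pi.2 <| by
    rintro (i | i)
    · exact (continuous_apply _).continuousOn.sub
        (continuousOn_const.sup (continuousOn_const.inf (hφpt _).fst))
    · exact continuousOn_const.mul ((hφpt i).snd.sub (continuous_apply _).continuousOn)
  obtain ⟨z, hz, hFz⟩ := poincare_miranda (a := lo) (b := hi)
    (fun i => by rcases i with i | i; exacts [(hab i).1, (hab i).2]) hF
    (by
      rintro z hz (i | i) hzi
      · exact sub_nonpos.2 (hzi.trans_le (le_max_left _ _))
      · exact (hs i _ (hpt hz i) _ ⟨(hpt hz _).1.2, (hpt hz _).2.2⟩).1 hzi)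
    (by
      rintro z hz (i | i) hzi
      · exact sub_nonneg.2 ((max_le (hab i).1 (min_le_left _ _)).trans hzi.ge)
      · exact (hs i _ (hpt hz i) _ ⟨(hpt hz _).1.2, (hpt hz _).2.2⟩).2 hzi)
  refine ⟨pt z, ⟨fun i => (hpt hz i).1, fun i => (hpt hz i).2⟩, fun i => ⟨?_, ?_⟩⟩
  · have hi := (mul_eq_zero.1 (congrFun hFz (.inr i))).resolve_left (hs0 i)
    exact (sub_eq_zero.1 hi).symm
  · simpa [F] using sub_eq_zero.1 (congrFun hFz (.inl (π i)))

theorem exists_periodic_orbit_of_stretchesAcross {N : ℕ} (hN : N ≠ 0)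
    {φ : ℕ → ℝ × ℝ → ℝ × ℝ} {a b : ℕ → ℝ × ℝ} (hab : a ≤ b)
    (hφper : Function.Periodic φ N) (haper : Function.Periodic a N)
    (hbper : Function.Periodic b N) (hφ : ∀ n, ContinuousOn (φ n) (Icc (a n) (b n)))
    (hstr : ∀ n, StretchesAcross (φ n) (a n) (b n) (a (n + 1)) (b (n + 1))) :
    ∃ p ∈ Icc a b, Function.Periodic p N ∧ ∀ n, (p (n + 1)).2 = (φ n (p n)).2 ∧
      (p (n + 1)).1 = max (a (n + 1)).1 (min (b (n + 1)).1 (φ n (p n)).1) := by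
  have : NeZero N := ⟨hN⟩
  have val_natCast {α : Type} {f : ℕ → α} (hf : Function.Periodic f N) (n : ℕ) :
      f (n : ZMod N).val = f n := by rw [ZMod.val_natCast, hf.map_mod_nat]
  have val_succ {α : Type} {f : ℕ → α} (hf : Function.Periodic f N) (j : ZMod N) :
      f (j + 1).val = f (j.val + 1) := by
    rw [← val_natCast hf (j.val + 1), Nat.cast_add, ZMod.natCast_zmod_val, Nat.cast_one]
  obtain ⟨p, hp, horbit⟩ := exists_orbit_of_stretchesAcross (Equiv.addRight (1 : ZMod N))
    (φ := fun j => φ j.val) (a := fun j => a j.val) (b := fun j => b j.val)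
    (fun j => hab j.val) (fun j => hφ j.val) fun j => by
      simpa only [Equiv.coe_addRight, val_succ haper, val_succ hbper] using hstr j.val
  refine ⟨fun n => p n, ⟨fun n => ?_, fun n => ?_⟩, fun n => by simp, fun n => ?_⟩
  · simpa only [val_natCast haper] using hp.1 (n : ZMod N)
  · simpa only [val_natCast hbper] using hp.2 (n : ZMod N)
  · simpa only [Equiv.coe_addRight, val_succ haper, val_succ hbper, val_natCast (haper.add_const 1),
      val_natCast (hbper.add_const 1), val_natCast hφper, Nat.cast_add, Nat.cast_one]
      using horbit (n : ZMod N)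

end Covering

section Caratheodory

/-- The weight `exp (2 |∫ k|)`, the integral being taken from `t₀` to `t`. With respect to it, the
integral operator with Lipschitz coefficient `k` based at `t₀` has norm at most `1 / 2`. -/
noncomputable def bieleckiWeight (k : ℝ → ℝ) (t₀ t : ℝ) : ℝ :=
  Real.exp (2 * |∫ s in t₀..t, k s|)

lemma bieleckiWeight_pos (k : ℝ → ℝ) (t₀ t : ℝ) : 0 < bieleckiWeight k t₀ t :=
  Real.exp_pos _

lemma one_le_bieleckiWeight (k : ℝ → ℝ) (t₀ t : ℝ) : 1 ≤ bieleckiWeight k t₀ t :=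
  Real.one_le_exp (by positivity)

lemma continuousOn_bieleckiWeight {k : ℝ → ℝ} {t₀ t₁ : ℝ}
    (hk : IntervalIntegrable k volume t₀ t₁) :
    ContinuousOn (bieleckiWeight k t₀) (uIcc t₀ t₁) :=
  ((intervalIntegral.continuousOn_primitive_interval
    ((intervalIntegrable_iff' (by simp)).1 hk)).abs.const_mul 2).rexp

lemma abs_integral_mul_comp_primitive_le {k φ : ℝ → ℝ} {t₀ t₁ : ℝ}
    (hk : IntervalIntegrable k volume t₀ t₁) (hk₀ : ∀ s, 0 ≤ k s) (hφ : Continuous φ)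
    (hφ₀ : ∀ x, 0 ≤ φ x) :
    |∫ s in t₀..t₁, k s * φ (∫ r in t₀..s, k r)| ≤ |∫ x in 0..∫ s in t₀..t₁, k s, φ x| := by
  set A : ℝ → ℝ := fun s => ∫ r in t₀..s, k r
  set Φ : ℝ → ℝ := fun x => ∫ y in 0..x, φ y
  have hsub {s : ℝ} (hs : s ∈ uIcc t₀ t₁) : uIcc t₀ s ⊆ uIcc t₀ t₁ :=
    uIcc_subset_uIcc left_mem_uIcc hs
  have hmono : MonotoneOn (Φ ∘ A) (uIcc t₀ t₁) := by
    intro s hs r hr hsr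
    have hA : A s ≤ A r := by
      rw [← sub_nonneg, intervalIntegral.integral_interval_sub_left
        (hk.mono_set (hsub hr)) (hk.mono_set (hsub hs))]
      exact intervalIntegral.integral_nonneg hsr fun x _ => hk₀ x
    change Φ (A s) ≤ Φ (A r)
    rw [← sub_nonneg, intervalIntegral.integral_interval_sub_left
      (hφ.intervalIntegrable _ _) (hφ.intervalIntegrable _ _)]
    exact intervalIntegral.integral_nonneg hA fun x _ => hφ₀ x
  have hderiv : ∀ᵐ s, s ∈ uIoc t₀ t₁ → deriv (Φ ∘ A) s = k s * φ (A s) := by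
    filter_upwards [hk.ae_hasDerivAt_integral] with s hs hst
    have hA : HasDerivAt A (k s) s := hs (uIoc_subset_uIcc hst) t₀ left_mem_uIcc
    have hΦ : HasDerivAt Φ (φ (A s)) (A s) := hφ.integral_hasStrictDerivAt 0 (A s) |>.hasDerivAt
    rw [(hΦ.comp s hA).deriv, mul_comm]
  have hmem := hmono.intervalIntegral_deriv_mem_uIcc
  rw [intervalIntegral.integral_congr_ae hderiv] at hmem
  have hA₀ : Φ (A t₀) = 0 := by simp [A, Φ]
  simpa [hA₀] using abs_sub_left_of_mem_uIcc hmem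

lemma abs_integral_exp_two_mul_abs_le (x : ℝ) :
    |∫ y in 0..x, Real.exp (2 * |y|)| ≤ Real.exp (2 * |x|) / 2 := by
  have hpos {x : ℝ} (hx : 0 ≤ x) :
      |∫ y in 0..x, Real.exp (2 * |y|)| ≤ Real.exp (2 * |x|) / 2 := by
    have hint : ∫ y in 0..x, Real.exp (2 * |y|) = Real.exp (2 * x) / 2 - 1 / 2 := by
      have hderiv (y : ℝ) : HasDerivAt (fun y => Real.exp (2 * y) / 2) (Real.exp (2 * y)) y := by
        simpa using (((hasDerivAt_id y).const_mul 2).exp.div_const 2)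
      rw [intervalIntegral.integral_congr fun y hy => by
          rw [abs_of_nonneg (uIcc_of_le hx ▸ hy).1],
        intervalIntegral.integral_eq_sub_of_hasDerivAt (fun y _ => hderiv y)
          (Continuous.intervalIntegrable (by fun_prop) _ _)]
      simp
    have hone : 1 ≤ Real.exp (2 * x) := Real.one_le_exp (by positivity)
    rw [hint, abs_of_nonneg hx, abs_of_nonneg (by linarith)]
    linarith
  rcases le_total 0 x with hx | hx
  · exact hpos hx
  · have := hpos (neg_nonneg.2 hx)
    rw [abs_neg x, ← neg_zero, ← intervalIntegral.integral_comp_neg,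
      intervalIntegral.integral_symm, abs_neg] at this
    simpa only [abs_neg] using this

lemma abs_integral_mul_bieleckiWeight_le {k : ℝ → ℝ} {t₀ t₁ : ℝ}
    (hk : IntervalIntegrable k volume t₀ t₁) (hk₀ : ∀ s, 0 ≤ k s) :
    |∫ s in t₀..t₁, k s * bieleckiWeight k t₀ s| ≤ bieleckiWeight k t₀ t₁ / 2 :=
  (abs_integral_mul_comp_primitive_le hk hk₀ (φ := fun x => Real.exp (2 * |x|)) (by fun_prop)
    fun _ => (Real.exp_pos _).le).trans (abs_integral_exp_two_mul_abs_le _)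

variable {E : Type*} [NormedAddCommGroup E] [NormedSpace ℝ E]

lemma norm_integral_le_bieleckiWeight {k : ℝ → ℝ} {t₀ t₁ C : ℝ} {v : ℝ → E}
    (hk : IntervalIntegrable k volume t₀ t₁) (hk₀ : ∀ s, 0 ≤ k s) (hC : 0 ≤ C)
    (hv : ∀ s ∈ uIcc t₀ t₁, ‖v s‖ ≤ k s * (C * bieleckiWeight k t₀ s)) :
    ‖∫ s in t₀..t₁, v s‖ ≤ C / 2 * bieleckiWeight k t₀ t₁ := by
  have hint : IntervalIntegrable (fun s => k s * bieleckiWeight k t₀ s) volume t₀ t₁ :=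
    hk.mul_continuousOn (continuousOn_bieleckiWeight hk)
  calc ‖∫ s in t₀..t₁, v s‖
      ≤ |∫ s in t₀..t₁, C * (k s * bieleckiWeight k t₀ s)| :=
        intervalIntegral.norm_integral_le_abs_of_norm_le
          ((ae_restrict_mem measurableSet_uIoc).mono fun s hs =>
            (hv s (uIoc_subset_uIcc hs)).trans_eq (by ring)) (hint.const_mul C)
    _ = C * |∫ s in t₀..t₁, k s * bieleckiWeight k t₀ s| := by
        rw [intervalIntegral.integral_const_mul, abs_mul, abs_of_nonneg hC]
    _ ≤ C * (bieleckiWeight k t₀ t₁ / 2) :=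
        mul_le_mul_of_nonneg_left (abs_integral_mul_bieleckiWeight_le hk hk₀) hC
    _ = C / 2 * bieleckiWeight k t₀ t₁ := by ring

variable {f : ℝ → E → E} {k : ℝ → NNReal}

theorem norm_sub_le_of_eq_add_integral {t₀ t₁ : ℝ} {z z' : ℝ → E}
    (hk : IntervalIntegrable (fun s => (k s : ℝ)) volume t₀ t₁)
    (hf : ∀ s, LipschitzWith (k s) (f s))
    (hz : ContinuousOn z (uIcc t₀ t₁)) (hz' : ContinuousOn z' (uIcc t₀ t₁))
    (hfz : IntervalIntegrable (fun s => f s (z s)) volume t₀ t₁)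
    (hfz' : IntervalIntegrable (fun s => f s (z' s)) volume t₀ t₁)
    (hz_eq : ∀ t ∈ uIcc t₀ t₁, z t = z t₀ + ∫ s in t₀..t, f s (z s))
    (hz_eq' : ∀ t ∈ uIcc t₀ t₁, z' t = z' t₀ + ∫ s in t₀..t, f s (z' s)) :
    ‖z t₁ - z' t₁‖ ≤ 2 * ‖z t₀ - z' t₀‖ * bieleckiWeight (fun s => k s) t₀ t₁ := by
  set e := bieleckiWeight (fun s => k s) t₀
  have he (t : ℝ) : 0 < e t := bieleckiWeight_pos _ _ _
  obtain ⟨τ, hτ, hmax⟩ := isCompact_uIcc.exists_isMaxOn nonempty_uIcc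
    ((hz.sub hz').norm.div (continuousOn_bieleckiWeight hk) fun t _ => (he t).ne')
  set M := ‖z τ - z' τ‖ / e τ
  have hM₀ : 0 ≤ M := div_nonneg (norm_nonneg _) (he τ).le
  have hM (t : ℝ) (ht : t ∈ uIcc t₀ t₁) : ‖z t - z' t‖ ≤ M * e t :=
    (div_le_iff₀ (he t)).1 (hmax ht)
  have hsub : uIcc t₀ τ ⊆ uIcc t₀ t₁ := uIcc_subset_uIcc left_mem_uIcc hτ
  have hτM : M * e τ ≤ ‖z t₀ - z' t₀‖ + M / 2 * e τ :=
    calc M * e τ = ‖z t₀ - z' t₀ + ∫ s in t₀..τ, (f s (z s) - f s (z' s))‖ := by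
          rw [div_mul_cancel₀ _ (he τ).ne', intervalIntegral.integral_sub (hfz.mono_set hsub)
            (hfz'.mono_set hsub), hz_eq τ hτ, hz_eq' τ hτ]
          congr 1
          abel
      _ ≤ ‖z t₀ - z' t₀‖ + M / 2 * e τ := by
          refine (norm_add_le _ _).trans (add_le_add_right ?_ _)
          refine norm_integral_le_bieleckiWeight (hk.mono_set hsub) (fun s => (k s).2)
            hM₀ fun s hs => ((hf s).norm_sub_le _ _).trans ?_
          exact mul_le_mul_of_nonneg_left (hM s (hsub hs)) (k s).2
  have hM_le : M ≤ 2 * ‖z t₀ - z' t₀‖ := by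
    have : M ≤ M * e τ := le_mul_of_one_le_right hM₀ (one_le_bieleckiWeight _ _ _)
    linarith
  exact (hM t₁ right_mem_uIcc).trans (mul_le_mul_of_nonneg_right hM_le (he t₁).le)

lemma exists_fixedPoint_of_weighted_contraction [CompleteSpace E] {X : Type*} [TopologicalSpace X]
    {e : X → ℝ} (he : Continuous e) (he₀ : ∀ t, 0 < e t) {F : (X → E) → X → E} {q : NNReal}
    (hq : q < 1) (hF : ∀ z, Continuous z → Continuous (F z))
    (hF₀ : ∃ C, ∀ t, ‖F 0 t‖ ≤ C * e t)
    (hFq : ∀ z z', Continuous z → Continuous z' → ∀ C, 0 ≤ C → (∀ t, ‖z t - z' t‖ ≤ C * e t) →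
      ∀ t, ‖F z t - F z' t‖ ≤ q * C * e t) :
    ∃ z, Continuous z ∧ F z = z := by
  have hcont (v : BoundedContinuousFunction X E) : Continuous fun t => e t • v t :=
    he.smul v.continuous
  have hdist (v v' : BoundedContinuousFunction X E) (t : X) :
      ‖F (fun s => e s • v s) t - F (fun s => e s • v' s) t‖ ≤ q * dist v v' * e t := by
    refine hFq _ _ (hcont v) (hcont v') _ dist_nonneg (fun s => ?_) t
    rw [← smul_sub, norm_smul, Real.norm_of_nonneg (he₀ s).le, mul_comm, ← dist_eq_norm]
    exact mul_le_mul_of_nonneg_right (BoundedContinuousFunction.dist_coe_le_dist s) (he₀ s).le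
  obtain ⟨C, hC⟩ := hF₀
  have hbound (v : BoundedContinuousFunction X E) (t : X) :
      ‖(e t)⁻¹ • F (fun s => e s • v s) t‖ ≤ q * dist v 0 + C := by
    rw [norm_smul, norm_inv, Real.norm_of_nonneg (he₀ t).le, inv_mul_le_iff₀ (he₀ t)]
    have h₀ : F (fun s => e s • (0 : BoundedContinuousFunction X E) s) t = F 0 t := by
      congr 1
      ext s
      simp
    have h := hdist v 0 t
    rw [h₀] at h
    linarith [norm_le_norm_add_norm_sub' (F (fun s => e s • v s) t) (F 0 t), hC t]
  let G (v : BoundedContinuousFunction X E) : BoundedContinuousFunction X E :=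
    .ofNormedAddCommGroup (fun t => (e t)⁻¹ • F (fun s => e s • v s) t)
      ((he.inv₀ fun t => (he₀ t).ne').smul (hF _ (hcont v))) _ (hbound v)
  have hG : ContractingWith q G := by
    refine ⟨hq, LipschitzWith.of_dist_le_mul fun v v' => ?_⟩
    refine (BoundedContinuousFunction.dist_le (by positivity)).2 fun t => ?_
    simp only [G, BoundedContinuousFunction.coe_ofNormedAddCommGroup]
    rw [dist_eq_norm, ← smul_sub, norm_smul, norm_inv, Real.norm_of_nonneg (he₀ t).le,
      inv_mul_le_iff₀ (he₀ t), mul_comm (e t)]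
    exact hdist v v' t
  refine ⟨_, hcont (hG.fixedPoint G), funext fun t => ?_⟩
  rw [← inv_smul_eq_iff₀ (he₀ t).ne']
  exact DFunLike.congr_fun hG.fixedPoint_isFixedPt t

theorem exists_eq_add_integral [CompleteSpace E]
    (hk : ∀ p q, IntervalIntegrable (fun s => (k s : ℝ)) volume p q)
    (hf : ∀ s, LipschitzWith (k s) (f s))
    (hfz : ∀ z : ℝ → E, Continuous z → ∀ p q, IntervalIntegrable (fun s => f s (z s)) volume p q)
    (t₀ : ℝ) (z₀ : E) : ∃ z : ℝ → E, Continuous z ∧ ∀ t, z t = z₀ + ∫ s in t₀..t, f s (z s) := by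
  set κ : ℝ → ℝ := fun s => k s + ‖f s 0‖
  have hκ₀ (s : ℝ) : 0 ≤ κ s := by positivity
  have hκ (p q : ℝ) : IntervalIntegrable κ volume p q :=
    (hk p q).add (hfz 0 continuous_const p q).norm
  set e := bieleckiWeight κ t₀
  have he₁ (t : ℝ) : 1 ≤ e t := one_le_bieleckiWeight _ _ _
  have he : Continuous e :=
    ((intervalIntegral.continuous_primitive hκ t₀).abs.const_mul 2).rexp
  have hF₀ (t : ℝ) : ‖z₀ + ∫ s in t₀..t, f s 0‖ ≤ (‖z₀‖ + 1 / 2) * e t :=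
    calc ‖z₀ + ∫ s in t₀..t, f s 0‖ ≤ ‖z₀‖ + 1 / 2 * e t := by
          refine (norm_add_le _ _).trans (add_le_add_right ?_ _)
          refine norm_integral_le_bieleckiWeight (hκ _ _) hκ₀ zero_le_one fun s _ => ?_
          rw [one_mul]
          exact (le_add_of_nonneg_left (k s).2).trans (le_mul_of_one_le_right (hκ₀ s) (he₁ s))
      _ ≤ (‖z₀‖ + 1 / 2) * e t := by
          rw [add_mul]
          exact add_le_add_left (le_mul_of_one_le_right (norm_nonneg _) (he₁ t)) _
  obtain ⟨z, hz, hFz⟩ :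
      ∃ z : ℝ → E, Continuous z ∧ (fun t => z₀ + ∫ s in t₀..t, f s (z s)) = z := by
    refine exists_fixedPoint_of_weighted_contraction he (fun _ => bieleckiWeight_pos _ _ _)
      (F := fun z t => z₀ + ∫ s in t₀..t, f s (z s)) (q := 1 / 2) (by norm_num)
      (fun z hz => continuous_const.add (intervalIntegral.continuous_primitive (hfz z hz) t₀))
      ⟨_, hF₀⟩ fun z z' hz hz' C hC hzz' t => ?_
    rw [add_sub_add_left_eq_sub, ← intervalIntegral.integral_sub (hfz z hz _ _) (hfz z' hz' _ _)]
    refine (norm_integral_le_bieleckiWeight (hκ _ _) hκ₀ hC fun s _ => ?_).trans_eq ?_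
    · refine ((hf s).norm_sub_le _ _).trans (mul_le_mul ?_ (hzz' s) (norm_nonneg _) (hκ₀ s))
      exact le_add_of_nonneg_right (norm_nonneg _)
    · norm_num
      ring
  exact ⟨z, hz, fun t => (congrFun hFz t).symm⟩

end Caratheodory

section SecondOrder

/-- `u` solves `u'' + b(t) h(u) = 0` in the sense of Carathéodory, with derivative `w`. -/
structure SecondOrderSol (b h u w : ℝ → ℝ) : Prop where
  hasDerivAt : ∀ t, HasDerivAt u (w t) t
  deriv_eq : ∀ t₁ t₂, w t₂ = w t₁ - ∫ s in t₁..t₂, b s * h (u s)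

/-- The time-dependent vector field in the phase plane `(u, u')` of `u'' + b(t) h(u) = 0`. -/
def phaseField (b h : ℝ → ℝ) (t : ℝ) (p : ℝ × ℝ) : ℝ × ℝ :=
  (p.2, -(b t * h p.1))

variable {b h u w u' w' : ℝ → ℝ} {K : NNReal} {t₀ t₁ : ℝ}

lemma lipschitzWith_phaseField (hh : LipschitzWith K h) (t : ℝ) :
    LipschitzWith (1 + ‖b t‖₊ * K) (phaseField b h t) := by
  have hsnd : LipschitzWith (‖b t‖₊ * K) fun p : ℝ × ℝ => -(b t * h p.1) := by
    have hfst : LipschitzWith K fun p : ℝ × ℝ => h p.1 := by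
      simpa [Function.comp_def] using hh.comp (LipschitzWith.prod_fst (α := ℝ) (β := ℝ))
    exact ((lipschitzWith_smul (b t)).comp hfst).neg
  exact (LipschitzWith.prod_snd.prodMk hsnd).weaken (max_le_add_of_nonneg zero_le_one bot_le)

lemma intervalIntegrable_phaseField_lipschitz (hb : ∀ p q, IntervalIntegrable b volume p q)
    (p q : ℝ) : IntervalIntegrable (fun t => ((1 + ‖b t‖₊ * K : NNReal) : ℝ)) volume p q := by
  simpa using intervalIntegrable_const.add ((hb p q).norm.mul_const (K : ℝ))

lemma intervalIntegrable_mul_comp (hb : ∀ p q, IntervalIntegrable b volume p q)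
    (hh : Continuous h) (hu : Continuous u) (p q : ℝ) :
    IntervalIntegrable (fun t => b t * h (u t)) volume p q :=
  (hb p q).mul_continuousOn (hh.comp hu).continuousOn

lemma intervalIntegrable_phaseField (hb : ∀ p q, IntervalIntegrable b volume p q)
    (hh : Continuous h) (hu : Continuous u) (hw : Continuous w) (p q : ℝ) :
    IntervalIntegrable (fun t => phaseField b h t (u t, w t)) volume p q :=
  have hbu := (intervalIntegrable_mul_comp hb hh hu p q).neg
  ⟨(hw.intervalIntegrable p q).1.prodMk hbu.1, (hw.intervalIntegrable p q).2.prodMk hbu.2⟩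

lemma integral_phaseField (hb : ∀ p q, IntervalIntegrable b volume p q)
    (hh : Continuous h) (hu : Continuous u) (hw : Continuous w) (p q : ℝ) :
    ∫ t in p..q, phaseField b h t (u t, w t) =
      (∫ t in p..q, w t, -∫ t in p..q, b t * h (u t)) := by
  have hw_int := hw.intervalIntegrable (μ := volume) p q
  have hbu : IntervalIntegrable (fun t => -(b t * h (u t))) volume p q :=
    (intervalIntegrable_mul_comp hb hh hu p q).neg
  rw [← intervalIntegral.integral_neg]
  simp only [intervalIntegral, phaseField]
  rw [integral_pair hw_int.1 hbu.1, integral_pair hw_int.2 hbu.2, Prod.mk_sub_mk]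

namespace SecondOrderSol

lemma continuous (hs : SecondOrderSol b h u w) : Continuous u :=
  continuous_iff_continuousAt.2 fun t => (hs.hasDerivAt t).continuousAt

lemma intervalIntegrable (hs : SecondOrderSol b h u w)
    (hb : ∀ p q, IntervalIntegrable b volume p q) (hh : Continuous h) (p q : ℝ) :
    IntervalIntegrable (fun t => b t * h (u t)) volume p q :=
  intervalIntegrable_mul_comp hb hh hs.continuous p q

lemma continuous_deriv (hs : SecondOrderSol b h u w)
    (hb : ∀ p q, IntervalIntegrable b volume p q) (hh : Continuous h) : Continuous w := by
  rw [funext fun t => hs.deriv_eq 0 t]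
  exact continuous_const.sub (intervalIntegral.continuous_primitive (hs.intervalIntegrable hb hh) 0)

lemma prodMk_eq_add_integral (hs : SecondOrderSol b h u w)
    (hb : ∀ p q, IntervalIntegrable b volume p q) (hh : Continuous h) (t₀ t : ℝ) :
    (u t, w t) = (u t₀, w t₀) + ∫ s in t₀..t, phaseField b h s (u s, w s) := by
  have hw := hs.continuous_deriv hb hh
  rw [integral_phaseField hb hh hs.continuous hw, intervalIntegral.integral_eq_sub_of_hasDerivAt
    (fun s _ => hs.hasDerivAt s) (hw.intervalIntegrable _ _), hs.deriv_eq t₀ t, Prod.mk_add_mk]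
  ring_nf

lemma norm_sub_le (hs : SecondOrderSol b h u w) (hs' : SecondOrderSol b h u' w')
    (hb : ∀ p q, IntervalIntegrable b volume p q) (hh : LipschitzWith K h) (t₀ t₁ : ℝ) :
    ‖(u t₁, w t₁) - (u' t₁, w' t₁)‖ ≤ 2 * ‖(u t₀, w t₀) - (u' t₀, w' t₀)‖ *
      bieleckiWeight (fun s => ((1 + ‖b s‖₊ * K : NNReal) : ℝ)) t₀ t₁ := by
  have hc := hs.continuous_deriv hb hh.continuous
  have hc' := hs'.continuous_deriv hb hh.continuous
  exact norm_sub_le_of_eq_add_integral (intervalIntegrable_phaseField_lipschitz hb _ _)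
    (lipschitzWith_phaseField hh) (hs.continuous.prodMk hc).continuousOn
    (hs'.continuous.prodMk hc').continuousOn
    (intervalIntegrable_phaseField hb hh.continuous hs.continuous hc _ _)
    (intervalIntegrable_phaseField hb hh.continuous hs'.continuous hc' _ _)
    (fun t _ => hs.prodMk_eq_add_integral hb hh.continuous t₀ t)
    fun t _ => hs'.prodMk_eq_add_integral hb hh.continuous t₀ t

lemma eq_of_eq (hs : SecondOrderSol b h u w) (hs' : SecondOrderSol b h u' w')
    (hb : ∀ p q, IntervalIntegrable b volume p q) (hh : LipschitzWith K h)
    (hu : u t₀ = u' t₀) (hw : w t₀ = w' t₀) (t : ℝ) : u t = u' t ∧ w t = w' t := by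
  have h := hs.norm_sub_le hs' hb hh t₀ t
  rw [hu, hw, sub_self, norm_zero, mul_zero, zero_mul, norm_le_zero_iff, sub_eq_zero] at h
  exact Prod.mk.inj h

lemma shift (hs : SecondOrderSol b h u w) {c : ℝ} (hbc : Function.Periodic b c) :
    SecondOrderSol b h (fun t => u (t + c)) fun t => w (t + c) where
  hasDerivAt t := (hs.hasDerivAt (t + c)).comp_add_const t c
  deriv_eq t₁ t₂ := by
    rw [hs.deriv_eq (t₁ + c), ← intervalIntegral.integral_comp_add_right]
    simp only [hbc _]

lemma eq_affine (hs : SecondOrderSol b h u w) (hb : ∀ p q, IntervalIntegrable b volume p q)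
    (hh : LipschitzWith K h) (hh₀ : ∀ s ≤ 0, h s = 0)
    (hle : ∀ t ∈ uIcc t₀ t₁, u t₀ + w t₀ * (t - t₀) ≤ 0) :
    u t₁ = u t₀ + w t₀ * (t₁ - t₀) ∧ w t₁ = w t₀ := by
  set v : ℝ → ℝ × ℝ := fun t => (u t₀ + w t₀ * (t - t₀), w t₀)
  have hv : Continuous v := by fun_prop
  have hfield {t : ℝ} (ht : t ∈ uIcc t₀ t₁) : phaseField b h t (v t) = (w t₀, 0) := by
    simp only [phaseField, v, hh₀ _ (hle t ht), mul_zero, neg_zero]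
  have hv_eq (t : ℝ) (ht : t ∈ uIcc t₀ t₁) :
      v t = v t₀ + ∫ s in t₀..t, phaseField b h s (v s) := by
    rw [intervalIntegral.integral_congr fun s hs =>
      hfield (uIcc_subset_uIcc left_mem_uIcc ht hs), intervalIntegral.integral_const]
    ext <;> simp [v, mul_comm]
  have hc := hs.continuous_deriv hb hh.continuous
  have hnorm := norm_sub_le_of_eq_add_integral
    (intervalIntegrable_phaseField_lipschitz hb t₀ t₁) (lipschitzWith_phaseField hh)
    (hs.continuous.prodMk hc).continuousOn hv.continuousOn
    (intervalIntegrable_phaseField hb hh.continuous hs.continuous hc _ _)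
    (intervalIntegrable_phaseField hb hh.continuous (by fun_prop) continuous_const _ _)
    (fun t _ => hs.prodMk_eq_add_integral hb hh.continuous t₀ t) hv_eq
  have hv₀ : (u t₀, w t₀) - v t₀ = 0 := by simp [v]
  rw [hv₀, norm_zero, mul_zero, zero_mul, norm_le_zero_iff, sub_eq_zero] at hnorm
  exact Prod.mk.inj hnorm

end SecondOrderSol

theorem exists_secondOrderSol (hb : ∀ p q, IntervalIntegrable b volume p q)
    (hh : LipschitzWith K h) (t₀ : ℝ) (p : ℝ × ℝ) :
    ∃ u w, SecondOrderSol b h u w ∧ (u t₀, w t₀) = p := by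
  obtain ⟨z, hz, hz_eq⟩ := exists_eq_add_integral
    (intervalIntegrable_phaseField_lipschitz hb) (lipschitzWith_phaseField hh)
    (fun z hz => intervalIntegrable_phaseField hb hh.continuous hz.fst hz.snd) t₀ p
  have hint (t : ℝ) := integral_phaseField hb hh.continuous hz.fst hz.snd t₀ t
  have hu (t : ℝ) : (z t).1 = p.1 + ∫ s in t₀..t, (z s).2 := by
    rw [hz_eq t]
    exact congrArg (fun v => p.1 + v.1) (hint t)
  have hw (t : ℝ) : (z t).2 = p.2 - ∫ s in t₀..t, b s * h (z s).1 := by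
    rw [sub_eq_add_neg, hz_eq t]
    exact congrArg (fun v => p.2 + v.2) (hint t)
  have hbz := intervalIntegrable_mul_comp hb hh.continuous hz.fst
  refine ⟨fun t => (z t).1, fun t => (z t).2, ⟨fun t => ?_, fun t₁ t₂ => ?_⟩, by simp [hz_eq t₀]⟩
  · rw [funext hu]
    exact (hz.snd.integral_hasStrictDerivAt t₀ t).hasDerivAt.const_add p.1
  · rw [hw t₁, hw t₂, sub_sub, intervalIntegral.integral_add_adjacent_intervals (hbz _ _) (hbz _ _)]

lemma continuous_of_secondOrderSol (hb : ∀ p q, IntervalIntegrable b volume p q)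
    (hh : LipschitzWith K h) {U W : ℝ × ℝ → ℝ → ℝ}
    (hUW : ∀ p, SecondOrderSol b h (U p) (W p)) (hp : ∀ p, (U p t₀, W p t₀) = p) (t : ℝ) :
    Continuous fun p => (U p t, W p t) := by
  have hlip : LipschitzWith
      (2 * bieleckiWeight (fun s => ((1 + ‖b s‖₊ * K : NNReal) : ℝ)) t₀ t).toNNReal
      fun p => (U p t, W p t) := by
    refine LipschitzWith.of_dist_le' fun p q => ?_
    have h := (hUW p).norm_sub_le (hUW q) hb hh t₀ t
    rw [hp, hp] at h
    rw [dist_eq_norm, dist_eq_norm]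
    linarith
  exact hlip.continuous

end SecondOrder

section Hump

/-- The equation `u'' + b(t) h(u) = 0` for a nonlinearity extended by zero to the negative
half-line and made globally Lipschitz, so that its flow in the phase plane is globally defined. -/
structure TruncatedProblem (b h : ℝ → ℝ) (K : NNReal) : Prop where
  intervalIntegrable : ∀ p q, IntervalIntegrable b volume p q
  lipschitz : LipschitzWith K h
  eq_zero : ∀ v ≤ 0, h v = 0
  nonneg : ∀ v, 0 ≤ h v

variable {b h u w : ℝ → ℝ} {K : NNReal} {p q H : ℝ}

namespace TruncatedProblem

lemma le_mul (P : TruncatedProblem b h K) {v B : ℝ} (hB : 0 ≤ B) (hv : v ≤ B) : h v ≤ K * B := by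
  rcases le_total v 0 with hv₀ | hv₀
  · rw [P.eq_zero v hv₀]
    positivity
  · have hdist := P.lipschitz.dist_le_mul v 0
    rw [Real.dist_eq, Real.dist_eq, P.eq_zero 0 le_rfl, sub_zero, sub_zero, abs_of_nonneg hv₀,
      abs_of_nonneg (P.nonneg v)] at hdist
    exact hdist.trans (by gcongr)

end TruncatedProblem

lemma ae_restrict_Icc_mono {Q : ℝ → Prop} {p' q' : ℝ} (hQ : ∀ᵐ t ∂volume.restrict (Icc p q), Q t)
    (hp : p ≤ p') (hq : q' ≤ q) : ∀ᵐ t ∂volume.restrict (Icc p' q'), Q t :=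
  ae_restrict_of_ae_restrict_of_subset (Icc_subset_Icc hp hq) hQ

namespace SecondOrderSol

lemma add_mul_le (S : SecondOrderSol b h u w) {c : ℝ} (hpq : p ≤ q)
    (hc : ∀ t ∈ Icc p q, c ≤ w t) : u p + c * (q - p) ≤ u q := by
  have hmvt := (convex_Icc p q).mul_sub_le_image_sub_of_le_deriv S.continuous.continuousOn
    (fun t _ => (S.hasDerivAt t).differentiableAt.differentiableWithinAt)
    (fun t ht => (hc t (interior_subset ht)).trans_eq (S.hasDerivAt t).deriv.symm)
    p (left_mem_Icc.2 hpq) q (right_mem_Icc.2 hpq) hpq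
  linarith

lemma le_add_mul (S : SecondOrderSol b h u w) {c : ℝ} (hpq : p ≤ q)
    (hc : ∀ t ∈ Icc p q, w t ≤ c) : u q ≤ u p + c * (q - p) := by
  have hmvt := (convex_Icc p q).image_sub_le_mul_sub_of_deriv_le S.continuous.continuousOn
    (fun t _ => (S.hasDerivAt t).differentiableAt.differentiableWithinAt)
    (fun t ht => (S.hasDerivAt t).deriv.trans_le (hc t (interior_subset ht)))
    p (left_mem_Icc.2 hpq) q (right_mem_Icc.2 hpq) hpq
  linarith

lemma deriv_sub_deriv (S : SecondOrderSol b h u w) (p q : ℝ) :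
    w p - w q = ∫ t in p..q, b t * h (u t) := by
  rw [S.deriv_eq p q, sub_sub_cancel]

lemma deriv_sub_le_mul_integral (S : SecondOrderSol b h u w) (P : TruncatedProblem b h K)
    (hpq : p ≤ q) (hH : ∀ᵐ t ∂volume.restrict (Icc p q), b t * h (u t) ≤ H * b t) :
    w p - w q ≤ H * ∫ t in p..q, b t := by
  rw [S.deriv_sub_deriv, ← intervalIntegral.integral_const_mul]
  exact intervalIntegral.integral_mono_ae_restrict hpq
    (S.intervalIntegrable P.intervalIntegrable P.lipschitz.continuous p q)
    ((P.intervalIntegrable p q).const_mul H) hH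

lemma mul_integral_le_deriv_sub (S : SecondOrderSol b h u w) (P : TruncatedProblem b h K)
    (hpq : p ≤ q) (hH : ∀ᵐ t ∂volume.restrict (Icc p q), H * b t ≤ b t * h (u t)) :
    H * (∫ t in p..q, b t) ≤ w p - w q := by
  rw [S.deriv_sub_deriv, ← intervalIntegral.integral_const_mul]
  exact intervalIntegral.integral_mono_ae_restrict hpq
    ((P.intervalIntegrable p q).const_mul H)
    (S.intervalIntegrable P.intervalIntegrable P.lipschitz.continuous p q) hH

lemma deriv_sub_le_of_nonneg (S : SecondOrderSol b h u w) (P : TruncatedProblem b h K)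
    (hpq : p ≤ q) (hb : ∀ᵐ t ∂volume.restrict (Icc p q), 0 ≤ b t)
    (hH : ∀ t ∈ Icc p q, h (u t) ≤ H) : w p - w q ≤ H * ∫ t in p..q, b t :=
  S.deriv_sub_le_mul_integral P hpq <| by
    filter_upwards [hb, ae_restrict_mem measurableSet_Icc] with t ht hmem
    rw [mul_comm]
    exact mul_le_mul_of_nonneg_right (hH t hmem) ht

lemma le_deriv_sub_of_nonneg (S : SecondOrderSol b h u w) (P : TruncatedProblem b h K)
    (hpq : p ≤ q) (hb : ∀ᵐ t ∂volume.restrict (Icc p q), 0 ≤ b t)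
    (hH : ∀ t ∈ Icc p q, H ≤ h (u t)) : H * (∫ t in p..q, b t) ≤ w p - w q :=
  S.mul_integral_le_deriv_sub P hpq <| by
    filter_upwards [hb, ae_restrict_mem measurableSet_Icc] with t ht hmem
    rw [mul_comm]
    exact mul_le_mul_of_nonneg_left (hH t hmem) ht

lemma deriv_sub_le_of_nonpos (S : SecondOrderSol b h u w) (P : TruncatedProblem b h K)
    (hpq : p ≤ q) (hb : ∀ᵐ t ∂volume.restrict (Icc p q), b t ≤ 0)
    (hH : ∀ t ∈ Icc p q, H ≤ h (u t)) : w p - w q ≤ H * ∫ t in p..q, b t :=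
  S.deriv_sub_le_mul_integral P hpq <| by
    filter_upwards [hb, ae_restrict_mem measurableSet_Icc] with t ht hmem
    rw [mul_comm]
    exact mul_le_mul_of_nonpos_right (hH t hmem) ht

lemma deriv_le_of_nonneg (S : SecondOrderSol b h u w) (P : TruncatedProblem b h K)
    (hpq : p ≤ q) (hb : ∀ᵐ t ∂volume.restrict (Icc p q), 0 ≤ b t) : w q ≤ w p := by
  have hle := S.le_deriv_sub_of_nonneg P hpq hb fun t _ => P.nonneg (u t)
  linarith

lemma le_deriv_of_nonpos (S : SecondOrderSol b h u w) (P : TruncatedProblem b h K)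
    (hpq : p ≤ q) (hb : ∀ᵐ t ∂volume.restrict (Icc p q), b t ≤ 0) : w p ≤ w q := by
  have hle := S.deriv_sub_le_of_nonpos P hpq hb fun t _ => P.nonneg (u t)
  linarith

/- Where `u ≤ 0` the equation reads `u'' = 0`, so a solution that is nonpositive and moving away
from zero stays on its tangent line. -/
lemma eq_affine_of_nonpos (S : SecondOrderSol b h u w) (P : TruncatedProblem b h K)
    (hpq : p ≤ q) (hu : u p ≤ 0) (hw : w p ≤ 0) : u q = u p + w p * (q - p) ∧ w q = w p :=
  S.eq_affine P.intervalIntegrable P.lipschitz P.eq_zero fun t ht => by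
    rw [uIcc_of_le hpq] at ht
    nlinarith [ht.1]

lemma eq_affine_of_nonneg (S : SecondOrderSol b h u w) (P : TruncatedProblem b h K)
    (hpq : p ≤ q) (hu : u q ≤ 0) (hw : 0 ≤ w q) : u p = u q + w q * (p - q) ∧ w p = w q :=
  S.eq_affine P.intervalIntegrable P.lipschitz P.eq_zero fun t ht => by
    rw [uIcc_of_ge hpq] at ht
    nlinarith [ht.2]

end SecondOrderSol

/-- The weight `b` has a positive hump on `[s, τ]`, of mass at most `A` and with mass at least `κ`
away from a collar of width `δ`, followed by a negative part on `[τ, s']`. -/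
structure Hump (b : ℝ → ℝ) (T A κ δ s τ s' : ℝ) : Prop where
  delta_pos : 0 < δ
  collar : s + δ ≤ τ - δ
  le_end : τ ≤ s'
  sub_le : τ - s ≤ T
  nonneg : ∀ᵐ t ∂volume.restrict (Icc s τ), 0 ≤ b t
  nonpos : ∀ᵐ t ∂volume.restrict (Icc τ s'), b t ≤ 0
  integral_le : ∫ t in s..τ, b t ≤ A
  le_integral : κ ≤ ∫ t in (s + δ)..(τ - δ), b t

/-- The quantities chosen before the weight is made strongly negative: initial values in `[0, ε]`,
slopes of size `Y` for which the nonlinearity is negligible, the a priori bound `R`, the largest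
admissible slope `Ymax`, and a lower bound `γ` of the nonlinearity away from zero. -/
structure ShootingScales (h : ℝ → ℝ) (K : NNReal) (T A κ δ : ℝ) where
  (ε Y R Ymax γ : ℝ)
  A_pos : 0 < A
  κ_pos : 0 < κ
  ε_pos : 0 < ε
  γ_pos : 0 < γ
  ε_le : 8 * ε ≤ Y * δ
  mul_le_R : Y * T ≤ R
  le_Ymax : K * R * A + R / (2 * δ) + Y ≤ Ymax
  small : ∀ v ∈ Icc 0 (2 * T * Y), 4 * A * T * h v ≤ v
  large : ∀ v, δ * R / T ≤ v → 3 * T * v ≤ κ * δ ^ 2 * h v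
  γ_le : ∀ v, ε * δ / T ≤ v → γ ≤ h v

variable {T A κ δ s τ s' : ℝ}

namespace ShootingScales

/-- The rise of the slope that carries every admissible trajectory beyond the slope `Ymax`. -/
def rise (G : ShootingScales h K T A κ δ) : ℝ :=
  G.Ymax + G.Y + K * (G.ε + G.Ymax * T) * A

end ShootingScales

/-- The negative part on `[τ, s']` is so strong after time `c`, and `c` so close to `s'`, that
trajectories leaving at `s'` with an admissible slope have a value at most `ε` there. -/
structure Barrier (b : ℝ → ℝ) (G : ShootingScales h K T A κ δ) (τ c s' : ℝ) : Prop where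
  le_start : τ ≤ c
  start_le : c ≤ s'
  mul_sub_le : G.Ymax * (s' - c) ≤ G.ε / 2
  integral_lt : G.γ * (∫ t in c..s', b t) < -G.rise

namespace Hump

variable {t : ℝ}

lemma two_mul_le (h₁ : Hump b T A κ δ s τ s') : 2 * δ ≤ τ - s := by
  linarith [h₁.collar]

lemma start_lt (h₁ : Hump b T A κ δ s τ s') : s < τ := by
  linarith [h₁.two_mul_le, h₁.delta_pos]

lemma start_lt_end (h₁ : Hump b T A κ δ s τ s') : s < s' :=
  h₁.start_lt.trans_le h₁.le_end

lemma two_mul_le_period (h₁ : Hump b T A κ δ s τ s') : 2 * δ ≤ T :=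
  h₁.two_mul_le.trans h₁.sub_le

lemma period_pos (h₁ : Hump b T A κ δ s τ s') : 0 < T := by
  linarith [h₁.two_mul_le_period, h₁.delta_pos]

lemma deriv_le (h₁ : Hump b T A κ δ s τ s') (P : TruncatedProblem b h K)
    (S : SecondOrderSol b h u w) (hp : s ≤ p) (hpq : p ≤ q) (hq : q ≤ τ) : w q ≤ w p :=
  S.deriv_le_of_nonneg P hpq (ae_restrict_Icc_mono h₁.nonneg hp hq)

lemma le_deriv (h₁ : Hump b T A κ δ s τ s') (P : TruncatedProblem b h K)
    (S : SecondOrderSol b h u w) (hp : τ ≤ p) (hpq : p ≤ q) (hq : q ≤ s') : w p ≤ w q :=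
  S.le_deriv_of_nonpos P hpq (ae_restrict_Icc_mono h₁.nonpos hp hq)

lemma integral_start_le (h₁ : Hump b T A κ δ s τ s') (P : TruncatedProblem b h K)
    (ht : t ∈ Icc s τ) : ∫ r in s..t, b r ≤ A := by
  have hadd := intervalIntegral.integral_add_adjacent_intervals
    (P.intervalIntegrable s t) (P.intervalIntegrable t τ)
  have hnn := intervalIntegral.integral_nonneg_of_ae_restrict ht.2
    (ae_restrict_Icc_mono h₁.nonneg ht.1 le_rfl)
  linarith [h₁.integral_le]

lemma apply_le (h₁ : Hump b T A κ δ s τ s') (P : TruncatedProblem b h K)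
    (S : SecondOrderSol b h u w) (ht : t ∈ Icc s τ) {y : ℝ} (hy : 0 ≤ y) (hw : w s ≤ y) :
    u t ≤ u s + y * T := by
  have hle := S.le_add_mul ht.1 fun r hr =>
    (h₁.deriv_le P S le_rfl hr.1 (hr.2.trans ht.2)).trans hw
  have hts : y * (t - s) ≤ y * T := mul_le_mul_of_nonneg_left (by linarith [h₁.sub_le, ht.2]) hy
  linarith

lemma sub_mul_le_deriv (h₁ : Hump b T A κ δ s τ s') (P : TruncatedProblem b h K)
    (S : SecondOrderSol b h u w) (ht : t ∈ Icc s τ) (hH₀ : 0 ≤ H)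
    (hH : ∀ r ∈ Icc s t, h (u r) ≤ H) : w s - H * A ≤ w t := by
  have hdrop := S.deriv_sub_le_of_nonneg P ht.1 (ae_restrict_Icc_mono h₁.nonneg le_rfl ht.2) hH
  have hA := mul_le_mul_of_nonneg_left (h₁.integral_start_le P ht) hH₀
  linarith

lemma sub_mul_le_deriv_of_le (h₁ : Hump b T A κ δ s τ s') (P : TruncatedProblem b h K)
    (S : SecondOrderSol b h u w) (ht : t ∈ Icc s τ) {B : ℝ} (hB : 0 ≤ B)
    (hu : ∀ r ∈ Icc s t, u r ≤ B) : w s - K * B * A ≤ w t :=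
  h₁.sub_mul_le_deriv P S ht (by positivity) fun r hr => P.le_mul hB (hu r hr)

/- Smallness of `h` at zero: the slope at most halves along the hump. -/
lemma half_le_deriv (h₁ : Hump b T A κ δ s τ s') (P : TruncatedProblem b h K)
    (G : ShootingScales h K T A κ δ) (S : SecondOrderSol b h u w) {B : ℝ} (hB₀ : 0 ≤ B)
    (hBY : B ≤ 2 * T * G.Y) (hBw : B ≤ 2 * T * w s) (hu : ∀ r ∈ Icc s τ, u r ≤ B)
    (ht : t ∈ Icc s τ) : w s / 2 ≤ w t := by
  have hT := h₁.period_pos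
  have hA := G.A_pos
  have hdrop := h₁.sub_mul_le_deriv P S ht (H := B / (4 * A * T)) (by positivity) fun r hr => by
    have hur := hu r ⟨hr.1, hr.2.trans ht.2⟩
    rcases le_total (u r) 0 with hneg | hpos
    · rw [P.eq_zero _ hneg]
      positivity
    · rw [le_div_iff₀ (by positivity), mul_comm]
      exact (G.small _ ⟨hpos, hur.trans hBY⟩).trans hur
  have hmul : B / (4 * A * T) * A ≤ w s / 2 := by
    rw [show B / (4 * A * T) * A = B / (4 * T) by field_simp, div_le_iff₀ (by positivity)]
    linarith
  linarith

lemma mul_le_apply_end (h₁ : Hump b T A κ δ s τ s') (P : TruncatedProblem b h K)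
    (G : ShootingScales h K T A κ δ) (S : SecondOrderSol b h u w) {B : ℝ} (hB₀ : 0 ≤ B)
    (hBY : B ≤ 2 * T * G.Y) (hBw : B ≤ 2 * T * w s) (hu : ∀ r ∈ Icc s τ, u r ≤ B)
    (hws : 0 ≤ w s) : u s + w s * δ ≤ u τ := by
  have hlb := S.add_mul_le h₁.start_lt.le fun t ht => h₁.half_le_deriv P G S hB₀ hBY hBw hu ht
  have hlen : w s / 2 * (2 * δ) ≤ w s / 2 * (τ - s) :=
    mul_le_mul_of_nonneg_left h₁.two_mul_le (by positivity)
  linarith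

variable {M : ℝ}

lemma Y_pos (h₁ : Hump b T A κ δ s τ s') (G : ShootingScales h K T A κ δ) : 0 < G.Y :=
  pos_of_mul_pos_left (by linarith [G.ε_le, G.ε_pos]) h₁.delta_pos.le

lemma R_pos (h₁ : Hump b T A κ δ s τ s') (G : ShootingScales h K T A κ δ) : 0 < G.R :=
  (mul_pos (h₁.Y_pos G) h₁.period_pos).trans_le G.mul_le_R

lemma slope_le_Ymax (h₁ : Hump b T A κ δ s τ s') (G : ShootingScales h K T A κ δ) :
    K * G.R * A + G.R / (2 * δ) ≤ G.Ymax := by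
  linarith [G.le_Ymax, h₁.Y_pos G]

lemma Y_le_Ymax (h₁ : Hump b T A κ δ s τ s') (G : ShootingScales h K T A κ δ) :
    G.Y ≤ G.Ymax := by
  have hδ := h₁.delta_pos
  have hR := h₁.R_pos G
  have hA := G.A_pos
  have hnn : 0 ≤ K * G.R * A + G.R / (2 * δ) := by positivity
  linarith [G.le_Ymax]

lemma ε_le_mul (h₁ : Hump b T A κ δ s τ s') (G : ShootingScales h K T A κ δ) :
    16 * G.ε ≤ T * G.Y := by
  nlinarith [G.ε_le, h₁.two_mul_le_period, h₁.Y_pos G]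

lemma mul_integral_lt (h₁ : Hump b T A κ δ s τ s') (P : TruncatedProblem b h K)
    {G : ShootingScales h K T A κ δ} {c : ℝ} (hb : Barrier b G τ c s') :
    G.γ * (∫ t in τ..s', b t) < -G.rise := by
  have hadd := intervalIntegral.integral_add_adjacent_intervals
    (P.intervalIntegrable τ c) (P.intervalIntegrable c s')
  have hnp : ∫ t in τ..c, b t ≤ 0 := by
    rw [intervalIntegral.integral_of_le hb.le_start, ← integral_Icc_eq_integral_Ioc]
    exact integral_nonpos_of_ae (ae_restrict_Icc_mono h₁.nonpos le_rfl hb.start_le)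
  exact (mul_le_mul_of_nonneg_left (by linarith) G.γ_pos.le).trans_lt hb.integral_lt

lemma Ymax_le_rise (h₁ : Hump b T A κ δ s τ s') (G : ShootingScales h K T A κ δ) :
    G.Ymax ≤ G.rise := by
  have hY := h₁.Y_pos G
  have hT := h₁.period_pos
  have hYmax := hY.trans_le (h₁.Y_le_Ymax G)
  have hε := G.ε_pos
  have hA := G.A_pos
  have hnn : 0 ≤ K * (G.ε + G.Ymax * T) * A := by positivity
  unfold ShootingScales.rise
  linarith

theorem apply_end_le_ε (h₁ : Hump b T A κ δ s τ s') (P : TruncatedProblem b h K)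
    {G : ShootingScales h K T A κ δ} {c : ℝ} (hb : Barrier b G τ c s')
    (S : SecondOrderSol b h u w) (hu : u s ≤ G.ε) (hw : w s ∈ Icc (-G.Y) G.Ymax)
    (hw' : w s' ≤ G.Ymax) : u s' ≤ G.ε := by
  by_contra! hlt
  have hT := h₁.period_pos
  have hYmax := (h₁.Y_pos G).trans_le (h₁.Y_le_Ymax G)
  have hε := G.ε_pos
  have hwτ := h₁.sub_mul_le_deriv_of_le P S (right_mem_Icc.2 h₁.start_lt.le)
    (B := G.ε + G.Ymax * T) (by positivity) fun r hr => by
      linarith [h₁.apply_le P S hr hYmax.le hw.2]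
  have hwc := h₁.le_deriv P S le_rfl hb.le_start hb.start_le
  have hγ (t : ℝ) (ht : t ∈ Icc c s') : G.γ ≤ h (u t) := by
    refine G.γ_le _ ?_
    have hub := S.le_add_mul ht.2 fun r hr =>
      (h₁.le_deriv P S (hb.le_start.trans (ht.1.trans hr.1)) hr.2 le_rfl).trans hw'
    have hts : G.Ymax * (s' - t) ≤ G.Ymax * (s' - c) := by gcongr; exact ht.1
    calc G.ε * δ / T ≤ G.ε / 2 := by
          rw [div_le_div_iff₀ hT two_pos]
          nlinarith [h₁.two_mul_le_period]
      _ ≤ u t := by linarith [hb.mul_sub_le]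
  have hrise := S.deriv_sub_le_of_nonpos P hb.start_le
    (ae_restrict_Icc_mono h₁.nonpos hb.le_start le_rfl) hγ
  have hlt_rise := hb.integral_lt
  unfold ShootingScales.rise at hlt_rise
  linarith [hw.1]

theorem Ymax_le_deriv_end (h₁ : Hump b T A κ δ s τ s') (P : TruncatedProblem b h K)
    {G : ShootingScales h K T A κ δ} {c : ℝ} (hb : Barrier b G τ c s')
    (S : SecondOrderSol b h u w) (hu : u s ∈ Icc 0 G.ε) (hε : G.ε ≤ T * w s) (hw : w s ≤ G.Y) :
    G.Ymax ≤ w s' := by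
  have hT := h₁.period_pos
  have hws : 0 < w s := pos_of_mul_pos_right (G.ε_pos.trans_le hε) hT.le
  have hBY : 2 * T * w s ≤ 2 * T * G.Y := by gcongr
  have hu_le (r : ℝ) (hr : r ∈ Icc s τ) : u r ≤ 2 * T * w s := by
    linarith [h₁.apply_le P S hr hws.le le_rfl, hu.2]
  have hwτ := h₁.half_le_deriv P G S (by positivity) hBY le_rfl hu_le
    (right_mem_Icc.2 h₁.start_lt.le)
  have huτ := h₁.mul_le_apply_end P G S (by positivity) hBY le_rfl hu_le hws.le
  have hγ (t : ℝ) (ht : t ∈ Icc τ s') : G.γ ≤ h (u t) := by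
    refine G.γ_le _ ?_
    have hmono := S.add_mul_le ht.1 (c := 0) fun r hr => by
      linarith [h₁.le_deriv P S le_rfl hr.1 (hr.2.trans ht.2)]
    calc G.ε * δ / T ≤ w s * δ := by
          rw [div_le_iff₀ hT]
          nlinarith [h₁.delta_pos]
      _ ≤ u t := by linarith [hu.1]
  have hrise := S.deriv_sub_le_of_nonpos P h₁.le_end h₁.nonpos hγ
  linarith [h₁.mul_integral_lt P hb, h₁.Ymax_le_rise G]

theorem deriv_end_le_of_le_neg (h₁ : Hump b T A κ δ s τ s') (P : TruncatedProblem b h K)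
    (G : ShootingScales h K T A κ δ) (S : SecondOrderSol b h u w) (hu : u s ≤ G.ε)
    (hw : w s ≤ -G.Y) : w s' ≤ -G.Y := by
  have hub := S.le_add_mul h₁.start_lt.le fun r hr => (h₁.deriv_le P S le_rfl hr.1 hr.2).trans hw
  have hwτ := (h₁.deriv_le P S le_rfl h₁.start_lt.le le_rfl).trans hw
  have huτ : u τ ≤ 0 := by
    nlinarith [h₁.two_mul_le, h₁.Y_pos G, G.ε_le, G.ε_pos, h₁.delta_pos]
  exact (S.eq_affine_of_nonpos P h₁.le_end huτ (by linarith [h₁.Y_pos G])).2.trans_le hwτ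

/- `u` is concave on the hump, hence lies above the tent with apex `(t, u t)`. -/
lemma mul_le_mul_of_concave (h₁ : Hump b T A κ δ s τ s') (P : TruncatedProblem b h K)
    (S : SecondOrderSol b h u w) (hu : ∀ t ∈ Icc s τ, 0 ≤ u t) {r : ℝ} (ht : t ∈ Icc s τ)
    (hr : r ∈ Icc (s + δ) (τ - δ)) : δ * u t ≤ T * u r := by
  have hδ := h₁.delta_pos
  have hrmem : r ∈ Icc s τ := ⟨by linarith [hr.1], by linarith [hr.2]⟩
  have hτs := h₁.sub_le
  have hu_r := hu r hrmem
  have hut := hu t ht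
  rcases le_total t r with htr | hrt
  · have hleft := S.add_mul_le htr fun q hq =>
      h₁.deriv_le P S (ht.1.trans hq.1) hq.2 hrmem.2
    have hright := S.le_add_mul hrmem.2 fun q hq => h₁.deriv_le P S hrmem.1 hq.1 hq.2
    have huτ := (hu τ (right_mem_Icc.2 h₁.start_lt.le)).trans hright
    have hchord : u t * (τ - r) ≤ u r * (τ - t) := by
      nlinarith [mul_le_mul_of_nonneg_left hleft (sub_nonneg.2 hrmem.2),
        mul_le_mul_of_nonneg_left huτ (sub_nonneg.2 htr)]
    nlinarith [hr.2, ht.1]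
  · have hright := S.le_add_mul hrt fun q hq =>
      h₁.deriv_le P S hrmem.1 hq.1 (hq.2.trans ht.2)
    have hleft := S.add_mul_le hrmem.1 fun q hq => h₁.deriv_le P S hq.1 hq.2 hrmem.2
    have hus := hu s (left_mem_Icc.2 h₁.start_lt.le)
    have hchord : u t * (r - s) ≤ u r * (t - s) := by
      nlinarith [mul_le_mul_of_nonneg_left hright (sub_nonneg.2 hrmem.1),
        mul_le_mul_of_nonneg_left hleft (sub_nonneg.2 hrt)]
    nlinarith [hr.1, ht.2]

lemma deriv_sub_mul_le (h₁ : Hump b T A κ δ s τ s') (P : TruncatedProblem b h K)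
    (S : SecondOrderSol b h u w) (hu : ∀ t ∈ Icc s τ, u t ∈ Icc 0 M) :
    (w (s + δ) - w (τ - δ)) * δ ≤ 2 * M := by
  have hδ := h₁.delta_pos
  have hcollar := h₁.collar
  have hleft := S.add_mul_le (le_add_of_nonneg_right hδ.le) fun q hq =>
    h₁.deriv_le P S hq.1 hq.2 (by linarith)
  have hright := S.le_add_mul (sub_le_self τ hδ.le) fun q hq =>
    h₁.deriv_le P S (by linarith) hq.1 hq.2
  have hus := (hu s (left_mem_Icc.2 h₁.start_lt.le)).1
  have huτ := (hu τ (right_mem_Icc.2 h₁.start_lt.le)).1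
  have hu₁ := (hu (s + δ) ⟨by linarith, by linarith⟩).2
  have hu₂ := (hu (τ - δ) ⟨by linarith, by linarith⟩).2
  linarith

theorem apply_lt_R (h₁ : Hump b T A κ δ s τ s') (P : TruncatedProblem b h K)
    (G : ShootingScales h K T A κ δ) (S : SecondOrderSol b h u w)
    (hu : ∀ t ∈ Icc s τ, 0 ≤ u t) : ∀ t ∈ Icc s τ, u t < G.R := by
  obtain ⟨tmax, htmax, hmax⟩ := isCompact_Icc.exists_isMaxOn (nonempty_Icc.2 h₁.start_lt.le)
    S.continuous.continuousOn
  set M := u tmax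
  suffices M < G.R from fun t ht => (hmax ht).trans_lt this
  by_contra! hRM
  have hM : 0 < M := (h₁.R_pos G).trans_le hRM
  have hδ := h₁.delta_pos
  have hT := h₁.period_pos
  have hκ := G.κ_pos
  have hdrop := S.le_deriv_sub_of_nonneg P h₁.collar
    (ae_restrict_Icc_mono h₁.nonneg (by linarith) (by linarith)) (H := 3 * M / (κ * δ))
    fun t ht => by
      have htent := h₁.mul_le_mul_of_concave P S hu htmax ht
      have hlarge := G.large (u t) <| by
        rw [div_le_iff₀ hT, mul_comm (u t)]
        exact (mul_le_mul_of_nonneg_left hRM hδ.le).trans htent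
      rw [div_le_iff₀ (by positivity)]
      nlinarith
  have hκle : 3 * M / δ ≤ w (s + δ) - w (τ - δ) := by
    calc 3 * M / δ = 3 * M / (κ * δ) * κ := by field_simp
      _ ≤ 3 * M / (κ * δ) * ∫ t in (s + δ)..(τ - δ), b t := by gcongr; exact h₁.le_integral
      _ ≤ _ := hdrop
  rw [div_le_iff₀ hδ] at hκle
  linarith [h₁.deriv_sub_mul_le P S fun t ht => ⟨hu t ht, hmax ht⟩]

lemma slope_le_deriv (h₁ : Hump b T A κ δ s τ s') (P : TruncatedProblem b h K)
    (G : ShootingScales h K T A κ δ) (S : SecondOrderSol b h u w) (hw : w s = G.Ymax)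
    (ht : t ∈ Icc s τ) (hu : ∀ r ∈ Icc s t, u r ≤ G.R) : G.R / (2 * δ) ≤ w t := by
  linarith [h₁.sub_mul_le_deriv_of_le P S ht (h₁.R_pos G).le hu, h₁.slope_le_Ymax G]

lemma exists_apply_neg (h₁ : Hump b T A κ δ s τ s') (P : TruncatedProblem b h K)
    (G : ShootingScales h K T A κ δ) (S : SecondOrderSol b h u w) (hu : 0 ≤ u s)
    (hw : w s = G.Ymax) : ∃ t ∈ Icc s τ, u t < 0 := by
  by_contra! hnn
  have hR := h₁.apply_lt_R P G S hnn
  have hlb := S.add_mul_le h₁.start_lt.le fun t ht =>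
    h₁.slope_le_deriv P G S hw ht fun r hr => (hR r ⟨hr.1, hr.2.trans ht.2⟩).le
  have hδ := h₁.delta_pos
  have hRδ : G.R / (2 * δ) * (2 * δ) ≤ G.R / (2 * δ) * (τ - s) :=
    mul_le_mul_of_nonneg_left h₁.two_mul_le (div_nonneg (h₁.R_pos G).le (by positivity))
  rw [div_mul_cancel₀ _ (by positivity)] at hRδ
  linarith [hR τ (right_mem_Icc.2 h₁.start_lt.le)]

theorem deriv_end_le_of_eq_Ymax (h₁ : Hump b T A κ δ s τ s') (P : TruncatedProblem b h K)
    (G : ShootingScales h K T A κ δ) (S : SecondOrderSol b h u w) (hu : 0 ≤ u s)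
    (hw : w s = G.Ymax) : w s' ≤ -G.Y := by
  have hY := h₁.Y_pos G
  have hδ := h₁.delta_pos
  obtain ⟨t₁, ht₁, hneg⟩ := h₁.exists_apply_neg P G S hu hw
  obtain ⟨t₀, ht₀, hbig⟩ : ∃ t₀ ∈ Icc s t₁, G.R ≤ u t₀ := by
    by_contra! hlt
    have hmono := S.add_mul_le ht₁.1 (c := 0) fun t ht =>
      (div_nonneg (h₁.R_pos G).le (by positivity)).trans <|
        h₁.slope_le_deriv P G S hw ⟨ht.1, ht.2.trans ht₁.2⟩ fun r hr =>
          (hlt r ⟨hr.1, hr.2.trans ht.2⟩).le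
    linarith
  have hw₁ : w t₁ ≤ -G.Y := by
    have hlb := S.add_mul_le ht₀.2 fun t ht => h₁.deriv_le P S (ht₀.1.trans ht.1) ht.2 ht₁.2
    by_contra! hlt
    have hlen : t₁ - t₀ ≤ T := by linarith [h₁.sub_le, ht₀.1, ht₁.2]
    nlinarith [ht₀.2, G.mul_le_R]
  exact (S.eq_affine_of_nonpos P (ht₁.2.trans h₁.le_end) hneg.le (by linarith)).2.trans_le hw₁

theorem apply_le_two_mul_ε (h₁ : Hump b T A κ δ s τ s') (P : TruncatedProblem b h K)
    (G : ShootingScales h K T A κ δ) (S : SecondOrderSol b h u w) (hu : u s ≤ G.ε)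
    (hw : w s ≤ G.ε / T) (ht : t ∈ Icc s τ) : u t ≤ 2 * G.ε := by
  have hT := h₁.period_pos
  have hle := h₁.apply_le P S ht (div_nonneg G.ε_pos.le hT.le) hw
  rw [div_mul_cancel₀ _ hT.ne'] at hle
  linarith

theorem exists_lt_apply (h₁ : Hump b T A κ δ s τ s') (P : TruncatedProblem b h K)
    (G : ShootingScales h K T A κ δ) (S : SecondOrderSol b h u w) (hu : 0 < u s)
    (hw : G.Y ≤ w s) : ∃ t ∈ Icc s τ, G.Y * δ / 2 < u t := by
  by_contra! hle
  have hδ := h₁.delta_pos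
  have hY := h₁.Y_pos G
  have hδT := h₁.two_mul_le_period
  have huτ := h₁.mul_le_apply_end P G S (B := G.Y * δ / 2) (by positivity)
    (by nlinarith) (by nlinarith) hle (by linarith)
  have hτ := hle τ (right_mem_Icc.2 h₁.start_lt.le)
  nlinarith [mul_pos hY hδ]

end Hump

end Hump

section Periodicity

lemma forall_of_add {p : ℕ → Prop} {m : ℕ} (hm : m ≠ 0) (hp : ∀ n, p n → p (n + m))
    (h : ∀ n < m, p n) (n : ℕ) : p n := by
  induction n using Nat.strong_induction_on with
  | _ n ih =>
    rcases lt_or_ge n m with hn | hn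
    · exact h n hn
    · simpa [Nat.sub_add_cancel hn] using hp _ (ih (n - m) (by omega))

lemma eventually_forall_of_add {ι : Type*} {l : Filter ι} {p : ℕ → ι → Prop} {m : ℕ} (hm : m ≠ 0)
    (hp : ∀ n x, p n x → p (n + m) x) (h : ∀ n, ∀ᶠ x in l, p n x) : ∀ᶠ x in l, ∀ n, p n x := by
  filter_upwards [(eventually_all_finset (Finset.range m)).2 fun n _ => h n] with x hx
  exact forall_of_add hm (fun n => hp n x) fun n hn => hx n (Finset.mem_range.2 hn)

lemma add_mul_of_add {σ : ℕ → ℝ} {N : ℕ} {T : ℝ} (h : ∀ n, σ (n + N) = σ n + T) (n k : ℕ) :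
    σ (n + k * N) = σ n + k * T := by
  induction k with
  | zero => simp
  | succ k ih =>
    rw [Nat.succ_mul, ← add_assoc, h, ih]
    push_cast
    ring

lemma exists_quasiperiodic_extension {N : ℕ} (hN : N ≠ 0) {T : ℝ} {σ : ℕ → ℝ}
    (hσ : σ N = σ 0 + T) :
    ∃ σ' : ℕ → ℝ, (∀ n, σ' (n + N) = σ' n + T) ∧ ∀ j ≤ N, σ' j = σ j := by
  have hN₀ : 0 < N := Nat.pos_of_ne_zero hN
  refine ⟨fun n => σ (n % N) + (n / N : ℕ) * T, fun n => ?_, fun j hj => ?_⟩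
  · simp only [Nat.add_mod_right, Nat.add_div_right n hN₀]
    push_cast
    ring
  · rcases hj.eq_or_lt with rfl | hj
    · simp [Nat.div_self hN₀, hσ]
    · simp [Nat.mod_eq_of_lt hj, Nat.div_eq_of_lt hj]

variable {a : ℝ → ℝ} {d p q : ℝ}

lemma ae_restrict_Icc_add_iff (ha : Function.Periodic a d) {Q : ℝ → Prop} :
    (∀ᵐ t ∂volume.restrict (Icc (p + d) (q + d)), Q (a t)) ↔
      ∀ᵐ t ∂volume.restrict (Icc p q), Q (a t) := by
  have hmp : MeasurePreserving (· + d) (volume.restrict (Icc p q))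
      (volume.restrict (Icc (p + d) (q + d))) := by
    simpa using (measurePreserving_add_right volume d).restrict_preimage_emb
      (measurableEmbedding_addRight d) (Icc (p + d) (q + d))
  rw [← hmp.map_eq, (measurableEmbedding_addRight d).ae_map_iff]
  simp only [ha _]

lemma integral_add_period (ha : Function.Periodic a d) :
    ∫ t in p + d..q + d, a t = ∫ t in p..q, a t := by
  rw [← intervalIntegral.integral_comp_add_right]
  simp only [ha _]

lemma posOn_Icc_add (ha : Function.Periodic a d) (h : PosOn a (Icc p q)) :
    PosOn a (Icc (p + d) (q + d)) :=
  ⟨(ae_restrict_Icc_add_iff ha).2 h.1, mt (ae_restrict_Icc_add_iff (Q := (· = 0)) ha).1 h.2⟩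

lemma PosOn.integral_pos (h : PosOn a (Icc p q)) (hpq : p ≤ q)
    (ha : IntervalIntegrable a volume p q) : 0 < ∫ t in p..q, a t := by
  have hae : 0 ≤ᵐ[volume.restrict (Ioc p q)] a := by
    rw [restrict_Ioc_eq_restrict_Icc]; exact h.1
  refine (intervalIntegral.integral_nonneg_of_ae_restrict hpq h.1).lt_of_ne' fun h0 => h.2 ?_
  have := (intervalIntegral.integral_eq_zero_iff_of_le_of_nonneg_ae hpq hae ha).1 h0
  rwa [restrict_Ioc_eq_restrict_Icc] at this

end Periodicity

section Shooting

variable {b h u w : ℝ → ℝ} {K : NNReal} {T A κ δ s τ c s' : ℝ}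

namespace TruncatedProblem

/-- The solution of the truncated problem through the phase point `p` at time `t₀`. -/
noncomputable def sol (P : TruncatedProblem b h K) (t₀ : ℝ) (p : ℝ × ℝ) : ℝ → ℝ :=
  (exists_secondOrderSol P.intervalIntegrable P.lipschitz t₀ p).choose

/-- The derivative of `TruncatedProblem.sol`. -/
noncomputable def solDeriv (P : TruncatedProblem b h K) (t₀ : ℝ) (p : ℝ × ℝ) : ℝ → ℝ :=
  (exists_secondOrderSol P.intervalIntegrable P.lipschitz t₀ p).choose_spec.choose

/-- The Poincaré map of the truncated problem, from time `t₀` to time `t₁`. -/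
noncomputable def poincareMap (P : TruncatedProblem b h K) (t₀ t₁ : ℝ) (p : ℝ × ℝ) : ℝ × ℝ :=
  (P.sol t₀ p t₁, P.solDeriv t₀ p t₁)

variable (P : TruncatedProblem b h K)

lemma secondOrderSol_sol (t₀ : ℝ) (p : ℝ × ℝ) :
    SecondOrderSol b h (P.sol t₀ p) (P.solDeriv t₀ p) :=
  (exists_secondOrderSol P.intervalIntegrable P.lipschitz t₀ p).choose_spec.choose_spec.1

lemma poincareMap_self (t₀ : ℝ) (p : ℝ × ℝ) : P.poincareMap t₀ t₀ p = p :=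
  (exists_secondOrderSol P.intervalIntegrable P.lipschitz t₀ p).choose_spec.choose_spec.2

lemma sol_self (t₀ : ℝ) (p : ℝ × ℝ) : P.sol t₀ p t₀ = p.1 :=
  congrArg Prod.fst (P.poincareMap_self t₀ p)

lemma solDeriv_self (t₀ : ℝ) (p : ℝ × ℝ) : P.solDeriv t₀ p t₀ = p.2 :=
  congrArg Prod.snd (P.poincareMap_self t₀ p)

lemma poincareMap_apply (S : SecondOrderSol b h u w) (t₀ t₁ : ℝ) :
    P.poincareMap t₀ t₁ (u t₀, w t₀) = (u t₁, w t₁) := by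
  have heq := (P.secondOrderSol_sol t₀ (u t₀, w t₀)).eq_of_eq S P.intervalIntegrable P.lipschitz
    (P.sol_self _ _) (P.solDeriv_self _ _) t₁
  exact Prod.ext heq.1 heq.2

lemma continuous_poincareMap (t₀ t₁ : ℝ) : Continuous (P.poincareMap t₀ t₁) :=
  continuous_of_secondOrderSol P.intervalIntegrable P.lipschitz (P.secondOrderSol_sol t₀)
    (P.poincareMap_self t₀) t₁

lemma poincareMap_add_period {d : ℝ} (hb : Function.Periodic b d) (t₀ t₁ : ℝ) :
    P.poincareMap (t₀ + d) (t₁ + d) = P.poincareMap t₀ t₁ := by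
  ext1 p
  have hshift := P.poincareMap_apply ((P.secondOrderSol_sol (t₀ + d) p).shift hb) t₀ t₁
  rwa [P.sol_self, P.solDeriv_self, eq_comm] at hshift

end TruncatedProblem

namespace ShootingScales

/-- The lower left corner of the rectangle of phase points with symbol `x`. -/
noncomputable def windowMin (G : ShootingScales h K T A κ δ) (x : Bool) : ℝ × ℝ :=
  (0, if x then G.Y else -G.Y)

/-- The upper right corner of the rectangle of phase points with symbol `x`. -/
noncomputable def windowMax (G : ShootingScales h K T A κ δ) (x : Bool) : ℝ × ℝ :=
  (G.ε, if x then G.Ymax else G.ε / T)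

end ShootingScales

namespace Hump

lemma scale_div_le (h₁ : Hump b T A κ δ s τ s') (G : ShootingScales h K T A κ δ) :
    G.ε / T ≤ G.Y := by
  rw [div_le_iff₀ h₁.period_pos]
  linarith [h₁.ε_le_mul G, G.ε_pos]

lemma neg_Y_le_windowMin (h₁ : Hump b T A κ δ s τ s') (G : ShootingScales h K T A κ δ) (x : Bool) :
    -G.Y ≤ (G.windowMin x).2 := by
  have hY := h₁.Y_pos G
  cases x <;> simp only [ShootingScales.windowMin, if_true, Bool.false_eq_true, if_false] <;>
    linarith

lemma windowMax_le_Ymax (h₁ : Hump b T A κ δ s τ s') (G : ShootingScales h K T A κ δ) (x : Bool) :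
    (G.windowMax x).2 ≤ G.Ymax := by
  cases x
  · exact (h₁.scale_div_le G).trans (h₁.Y_le_Ymax G)
  · exact le_rfl

lemma windowMin_le_windowMax (h₁ : Hump b T A κ δ s τ s') (G : ShootingScales h K T A κ δ)
    (x : Bool) : G.windowMin x ≤ G.windowMax x := by
  refine ⟨G.ε_pos.le, ?_⟩
  cases x
  · exact (neg_nonpos.2 (h₁.Y_pos G).le).trans (div_nonneg G.ε_pos.le h₁.period_pos.le)
  · exact h₁.Y_le_Ymax G

theorem stretchesAcross (h₁ : Hump b T A κ δ s τ s') (P : TruncatedProblem b h K)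
    {G : ShootingScales h K T A κ δ} (hb : Barrier b G τ c s') (x y : Bool) :
    StretchesAcross (P.poincareMap s s') (G.windowMin x) (G.windowMax x)
      (G.windowMin y) (G.windowMax y) := by
  have hT := h₁.period_pos
  have hmin := h₁.neg_Y_le_windowMin G y
  have hmax := h₁.windowMax_le_Ymax G y
  have hsol (p : ℝ × ℝ) := P.secondOrderSol_sol s p
  cases x
  · refine .inl fun p hp => ⟨fun hbot => ?_, fun htop => ?_⟩
    · exact (h₁.deriv_end_le_of_le_neg P G (hsol p) ((P.sol_self s p).trans_le hp.2.1)
        ((P.solDeriv_self s p).trans hbot).le).trans hmin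
    · have hslope : P.solDeriv s p s = G.ε / T := (P.solDeriv_self s p).trans htop
      have hε : G.ε ≤ T * P.solDeriv s p s := by rw [hslope, mul_div_cancel₀ _ hT.ne']
      exact hmax.trans (h₁.Ymax_le_deriv_end P hb (hsol p)
        ((P.sol_self s p).symm ▸ ⟨hp.1.1, hp.2.1⟩) hε (hslope.trans_le (h₁.scale_div_le G)))
  · refine .inr fun p hp => ⟨fun hbot => ?_, fun htop => ?_⟩
    · have hslope : P.solDeriv s p s = G.Y := (P.solDeriv_self s p).trans hbot
      have hε : G.ε ≤ T * P.solDeriv s p s := by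
        rw [hslope]
        linarith [h₁.ε_le_mul G, G.ε_pos]
      exact hmax.trans (h₁.Ymax_le_deriv_end P hb (hsol p)
        ((P.sol_self s p).symm ▸ ⟨hp.1.1, hp.2.1⟩) hε hslope.le)
    · exact (h₁.deriv_end_le_of_eq_Ymax P G (hsol p) ((P.sol_self s p).symm ▸ hp.1.1)
        ((P.solDeriv_self s p).trans htop)).trans hmin

end Hump

/-- Shooting times `s n` such that on each `[s n, s (n + 1)]` the `T`-periodic weight `b` has a hump
followed by a barrier, and `m` of these intervals make up a period. -/
structure HumpTrain (b : ℝ → ℝ) (G : ShootingScales h K T A κ δ) (m : ℕ) (s τ c : ℕ → ℝ) :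
    Prop where
  hump : ∀ n, Hump b T A κ δ (s n) (τ n) (s (n + 1))
  barrier : ∀ n, Barrier b G (τ n) (c n) (s (n + 1))
  periodic : Function.Periodic b T
  add_period : ∀ n, s (n + m) = s n + T

/-- `u` is a solution with derivative `w` that is in the window of `S n` at time `s n`. -/
structure FollowsItinerary (b : ℝ → ℝ) (G : ShootingScales h K T A κ δ) (s : ℕ → ℝ) (S : ℕ → Bool)
    (u w : ℝ → ℝ) : Prop where
  sol : SecondOrderSol b h u w
  pos : ∀ n, 0 < u (s n)
  mem_window : ∀ n, (u (s n), w (s n)) ∈ Icc (G.windowMin (S n)) (G.windowMax (S n))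

namespace HumpTrain

variable {G : ShootingScales h K T A κ δ} {m : ℕ} {s τ c : ℕ → ℝ} {S : ℕ → Bool} {n k : ℕ}
  {p : ℕ → ℝ × ℝ}

lemma exists_clamped_orbit (Q : HumpTrain b G m s τ c) (P : TruncatedProblem b h K)
    (hN : k * m ≠ 0) (hS : Function.Periodic S (k * m)) :
    ∃ p : ℕ → ℝ × ℝ, Function.Periodic p (k * m) ∧
      (∀ n, p n ∈ Icc (G.windowMin (S n)) (G.windowMax (S n))) ∧
      ∀ n, (p (n + 1)).2 = (P.poincareMap (s n) (s (n + 1)) (p n)).2 ∧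
        (p (n + 1)).1 = max 0 (min G.ε (P.poincareMap (s n) (s (n + 1)) (p n)).1) := by
  have hφ (n : ℕ) : P.poincareMap (s (n + k * m)) (s (n + k * m + 1)) =
      P.poincareMap (s n) (s (n + 1)) := by
    rw [add_right_comm, add_mul_of_add Q.add_period, add_mul_of_add Q.add_period,
      P.poincareMap_add_period (Q.periodic.nat_mul k)]
  obtain ⟨p, hp, hper, hstep⟩ := exists_periodic_orbit_of_stretchesAcross hN
    (φ := fun n => P.poincareMap (s n) (s (n + 1)))
    (a := fun n => G.windowMin (S n)) (b := fun n => G.windowMax (S n))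
    (fun n => (Q.hump n).windowMin_le_windowMax G (S n)) hφ
    (fun n => congrArg G.windowMin (hS n)) (fun n => congrArg G.windowMax (hS n))
    (fun n => (P.continuous_poincareMap _ _).continuousOn)
    (fun n => (Q.hump n).stretchesAcross P (Q.barrier n) _ _)
  exact ⟨p, hper, fun n => ⟨hp.1 n, hp.2 n⟩, hstep⟩

lemma poincareMap_fst_le (Q : HumpTrain b G m s τ c) (P : TruncatedProblem b h K)
    (hp : ∀ n, p n ∈ Icc (G.windowMin (S n)) (G.windowMax (S n)))
    (hstep : ∀ n, (p (n + 1)).2 = (P.poincareMap (s n) (s (n + 1)) (p n)).2) (n : ℕ) :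
    (P.poincareMap (s n) (s (n + 1)) (p n)).1 ≤ G.ε := by
  refine (Q.hump n).apply_end_le_ε P (Q.barrier n) (P.secondOrderSol_sol (s n) (p n)) ?_ ?_ ?_
  · exact (P.sol_self _ _).trans_le (hp n).2.1
  · rw [P.solDeriv_self]
    exact ⟨((Q.hump n).neg_Y_le_windowMin G _).trans (hp n).1.2,
      (hp n).2.2.trans ((Q.hump n).windowMax_le_Ymax G _)⟩
  · exact (hstep n).symm.trans_le ((hp (n + 1)).2.2.trans ((Q.hump n).windowMax_le_Ymax G _))

lemma snd_nonpos_of_poincareMap_fst_nonpos (Q : HumpTrain b G m s τ c)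
    (P : TruncatedProblem b h K) {q : ℝ × ℝ} (hq : 0 ≤ q.1)
    (hle : (P.poincareMap (s n) (s (n + 1)) q).1 ≤ 0) :
    (P.poincareMap (s n) (s (n + 1)) q).2 ≤ 0 := by
  by_contra! hlt
  have haff := ((P.secondOrderSol_sol (s n) q).eq_affine_of_nonneg P
    (Q.hump n).start_lt_end.le hle hlt.le).1
  have hneg := mul_pos hlt (sub_pos.2 (Q.hump n).start_lt_end)
  rw [P.sol_self] at haff
  simp only [TruncatedProblem.poincareMap] at hle hneg
  linarith

lemma poincareMap_zero_fst (Q : HumpTrain b G m s τ c) (P : TruncatedProblem b h K) {y : ℝ}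
    (hy : y ≤ 0) : P.poincareMap (s n) (s (n + 1)) (0, y) = (y * (s (n + 1) - s n), y) := by
  have haff := (P.secondOrderSol_sol (s n) (0, y)).eq_affine_of_nonpos P
    (Q.hump n).start_lt_end.le (P.sol_self _ _).le ((P.solDeriv_self _ _).trans_le hy)
  rw [P.sol_self, P.solDeriv_self, zero_add] at haff
  exact Prod.ext haff.1 haff.2

/- A clamped orbit whose position reaches zero is trapped in the states `(0, y)` with `y ≤ 0`, so it
never again meets the window of the symbol `true`. -/
lemma poincareMap_fst_pos (Q : HumpTrain b G m s τ c) (P : TruncatedProblem b h K)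
    (hp : ∀ n, p n ∈ Icc (G.windowMin (S n)) (G.windowMax (S n)))
    (hstep : ∀ n, (p (n + 1)).2 = (P.poincareMap (s n) (s (n + 1)) (p n)).2 ∧
      (p (n + 1)).1 = max 0 (min G.ε (P.poincareMap (s n) (s (n + 1)) (p n)).1))
    (hS : ∃ᶠ n in atTop, S n = true) (n : ℕ) :
    0 < (P.poincareMap (s n) (s (n + 1)) (p n)).1 := by
  by_contra! hle
  have htrap (i : ℕ) (hi : n + 1 ≤ i) : (p i).1 = 0 ∧ (p i).2 ≤ 0 := by
    induction i, hi using Nat.le_induction with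
    | base =>
      rw [(hstep n).1, (hstep n).2, max_eq_left (min_le_of_right_le hle)]
      exact ⟨rfl, Q.snd_nonpos_of_poincareMap_fst_nonpos P (hp n).1.1 hle⟩
    | succ i _ ih =>
      have hpi : p i = (0, (p i).2) := Prod.ext ih.1 rfl
      have hφ := Q.poincareMap_zero_fst (n := i) P ih.2
      rw [← hpi] at hφ
      have hpos := mul_nonpos_of_nonpos_of_nonneg ih.2
        (sub_nonneg.2 (Q.hump i).start_lt_end.le)
      rw [(hstep i).1, (hstep i).2, hφ]
      exact ⟨max_eq_left (min_le_of_right_le hpos), ih.2⟩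
  obtain ⟨i, hi, hSi⟩ := frequently_atTop.1 hS (n + 1)
  have hY : G.Y ≤ (p i).2 := by simpa [ShootingScales.windowMin, hSi] using (hp i).1.2
  linarith [(htrap i hi).2, (Q.hump 0).Y_pos G]

theorem exists_periodic_orbit (Q : HumpTrain b G m s τ c) (P : TruncatedProblem b h K)
    (hN : k * m ≠ 0) (hS : Function.Periodic S (k * m)) (hS₁ : ∃ᶠ n in atTop, S n = true) :
    ∃ p : ℕ → ℝ × ℝ, Function.Periodic p (k * m) ∧ (∀ n, 0 < (p n).1) ∧
      (∀ n, p n ∈ Icc (G.windowMin (S n)) (G.windowMax (S n))) ∧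
      ∀ n, p (n + 1) = P.poincareMap (s n) (s (n + 1)) (p n) := by
  obtain ⟨p, hper, hp, hstep⟩ := Q.exists_clamped_orbit P hN hS
  have hpos := Q.poincareMap_fst_pos P hp hstep hS₁
  have hle := Q.poincareMap_fst_le P hp fun n => (hstep n).1
  have hfst (n : ℕ) : (p (n + 1)).1 = (P.poincareMap (s n) (s (n + 1)) (p n)).1 := by
    rw [(hstep n).2, min_eq_right (hle n), max_eq_right (hpos n).le]
  refine ⟨p, hper, fun n => ?_, hp, fun n => Prod.ext (hfst n) (hstep n).1⟩
  obtain ⟨N, hN⟩ := Nat.exists_eq_succ_of_ne_zero hN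
  rw [← hper n, hN, Nat.add_succ, hfst]
  exact hpos _

theorem exists_followsItinerary (Q : HumpTrain b G m s τ c) (P : TruncatedProblem b h K)
    (hN : k * m ≠ 0) (hS : Function.Periodic S (k * m)) (hS₁ : ∃ᶠ n in atTop, S n = true) :
    ∃ u w, FollowsItinerary b G s S u w ∧ Function.Periodic u (k * T) := by
  obtain ⟨p, hper, hpos, hp, hstep⟩ := Q.exists_periodic_orbit P hN hS hS₁
  have hsol := P.secondOrderSol_sol (s 0) (p 0)
  set u := P.sol (s 0) (p 0)
  set w := P.solDeriv (s 0) (p 0)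
  have huw (n : ℕ) : (u (s n), w (s n)) = p n := by
    induction n with
    | zero => exact P.poincareMap_self _ _
    | succ n ih => rw [hstep, ← ih, P.poincareMap_apply hsol]
  have hend : (u (s 0 + k * T), w (s 0 + k * T)) = (u (s 0), w (s 0)) := by
    rw [← add_mul_of_add Q.add_period, huw, huw, hper]
  refine ⟨u, w, ⟨hsol, fun n => ?_, fun n => huw n ▸ hp n⟩, fun t => ?_⟩
  · exact (hpos n).trans_eq (congrArg Prod.fst (huw n)).symm
  · exact ((hsol.shift (Q.periodic.nat_mul k)).eq_of_eq hsol P.intervalIntegrable P.lipschitz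
      (congrArg Prod.fst hend) (congrArg Prod.snd hend) t).1

lemma exists_mem_Icc_apply_eq (Q : HumpTrain b G m s τ c) (hk : k ≠ 0)
    (hu : Function.Periodic u (k * T)) (t : ℝ) : ∃ n, ∃ r ∈ Icc (s n) (s (n + 1)), u t = u r := by
  have hkT : 0 < k * T := mul_pos (by positivity) (Q.hump 0).period_pos
  obtain ⟨r, hr, heq⟩ := hu.exists_mem_Ico hkT t (s 0)
  have hlast : s 0 + k * T = s (k * m) := by
    rw [← add_mul_of_add Q.add_period, zero_add]
  obtain ⟨n, -, hn⟩ := mem_iUnion₂.1 (Ico_subset_biUnion_Ico _ s (hlast ▸ hr))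
  exact ⟨n, r, Ico_subset_Icc_self hn, heq⟩

end HumpTrain

namespace FollowsItinerary

variable {G : ShootingScales h K T A κ δ} {m : ℕ} {s τ c : ℕ → ℝ} {S : ℕ → Bool} {n k : ℕ} {t : ℝ}

lemma pos_of_mem_Icc (F : FollowsItinerary b G s S u w) (P : TruncatedProblem b h K)
    (ht : t ∈ Icc (s n) (s (n + 1))) : 0 < u t := by
  by_contra! hle
  rcases le_total (w t) 0 with hw | hw
  · have haff := (F.sol.eq_affine_of_nonpos P ht.2 hle hw).1
    nlinarith [F.pos (n + 1), ht.2]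
  · have haff := (F.sol.eq_affine_of_nonneg P ht.1 hle hw).1
    nlinarith [F.pos n, ht.1]

lemma lt_R_of_mem_Icc (F : FollowsItinerary b G s S u w) (P : TruncatedProblem b h K)
    (Q : HumpTrain b G m s τ c) (hu : ∀ t, 0 < u t) (ht : t ∈ Icc (s n) (s (n + 1))) :
    u t < G.R := by
  have hhump (n : ℕ) := (Q.hump n).apply_lt_R P G F.sol fun t _ => (hu t).le
  rcases le_total t (τ n) with htτ | htτ
  · exact hhump n t ⟨ht.1, htτ⟩
  rcases le_total (w t) 0 with hw | hw
  · have hub := F.sol.le_add_mul htτ (c := 0) fun r hr =>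
      ((Q.hump n).le_deriv P F.sol hr.1 hr.2 ht.2).trans hw
    linarith [hhump n (τ n) (right_mem_Icc.2 (Q.hump n).start_lt.le)]
  · have hlb := F.sol.add_mul_le ht.2 (c := 0) fun r hr =>
      hw.trans ((Q.hump n).le_deriv P F.sol htτ hr.1 hr.2)
    linarith [hhump (n + 1) (s (n + 1)) (left_mem_Icc.2 (Q.hump (n + 1)).start_lt.le)]

lemma apply_le_of_eq_false (F : FollowsItinerary b G s S u w) (P : TruncatedProblem b h K)
    (Q : HumpTrain b G m s τ c) (hn : S n = false) (ht : t ∈ Icc (s n) (τ n)) : u t ≤ 2 * G.ε := by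
  have hmem := (F.mem_window n).2
  simp only [ShootingScales.windowMax, hn, Bool.false_eq_true, if_false] at hmem
  exact (Q.hump n).apply_le_two_mul_ε P G F.sol hmem.1 hmem.2 ht

lemma exists_lt_apply_of_eq_true (F : FollowsItinerary b G s S u w) (P : TruncatedProblem b h K)
    (Q : HumpTrain b G m s τ c) (hn : S n = true) {e : ℝ} (he : e ∈ Icc (s n) (τ n))
    (hb : ∀ᵐ t ∂volume.restrict (Icc (s n) e), b t ≤ 0) :
    ∃ t ∈ Icc e (τ n), G.Y * δ / 2 < u t := by
  have hY : G.Y ≤ w (s n) := by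
    simpa [ShootingScales.windowMin, hn] using (F.mem_window n).1.2
  obtain ⟨t, ht, hlt⟩ := (Q.hump n).exists_lt_apply P G F.sol (F.pos n) hY
  rcases le_total e t with het | hte
  · exact ⟨t, ⟨het, ht.2⟩, hlt⟩
  · have hmono := F.sol.add_mul_le hte (c := 0) fun r hr => by
      linarith [F.sol.le_deriv_of_nonpos P (ht.1.trans hr.1) (ae_restrict_Icc_mono hb le_rfl hr.2),
        (Q.hump n).Y_pos G]
    exact ⟨e, ⟨le_rfl, he.2⟩, by linarith⟩

end FollowsItinerary

theorem HumpTrain.exists_followsItinerary_mem_Ioo {G : ShootingScales h K T A κ δ} {m k : ℕ}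
    {s τ c : ℕ → ℝ} {S : ℕ → Bool} (Q : HumpTrain b G m s τ c) (P : TruncatedProblem b h K)
    (hN : k * m ≠ 0) (hS : Function.Periodic S (k * m)) (hS₁ : ∃ᶠ n in atTop, S n = true) :
    ∃ u w, FollowsItinerary b G s S u w ∧ Function.Periodic u (k * T) ∧
      ∀ t, u t ∈ Ioo 0 G.R := by
  obtain ⟨u, w, F, hu⟩ := Q.exists_followsItinerary P hN hS hS₁
  have hk : k ≠ 0 := left_ne_zero_of_mul hN
  have hpos (t : ℝ) : 0 < u t := by
    obtain ⟨n, r, hr, heq⟩ := Q.exists_mem_Icc_apply_eq hk hu t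
    exact heq ▸ F.pos_of_mem_Icc P hr
  refine ⟨u, w, F, hu, fun t => ⟨hpos t, ?_⟩⟩
  obtain ⟨n, r, hr, heq⟩ := Q.exists_mem_Icc_apply_eq hk hu t
  exact heq ▸ F.lt_R_of_mem_Icc P Q hpos hr

end Shooting

section Truncation

/-- `g` is locally Lipschitz on `[0, ∞)`, positive on `(0, ∞)`, and superlinear both at zero and at
infinity. -/
structure SuperlinearNonlinearity (g : ℝ → ℝ) : Prop where
  lipschitz : ∀ R, ∃ L, LipschitzOnWith L g (Icc 0 R)
  zero : g 0 = 0
  pos : ∀ v, 0 < v → 0 < g v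
  tendsto_zero : Tendsto (fun v => g v / v) (nhdsWithin 0 (Ioi 0)) (nhds 0)
  tendsto_atTop : Tendsto (fun v => g v / v) atTop atTop

/-- The modification of `g` that is constant to the left of `0` and affine with slope `κ` to the
right of `R`. -/
noncomputable def truncation (g : ℝ → ℝ) {R : ℝ} (hR : 0 ≤ R) (κ : NNReal) (v : ℝ) : ℝ :=
  IccExtend hR (fun r => g r) v + κ * max (v - R) 0

variable {g : ℝ → ℝ} {R v : ℝ} {κ : NNReal}

lemma truncation_of_mem (hR : 0 ≤ R) (hv : v ∈ Icc 0 R) : truncation g hR κ v = g v := by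
  simp [truncation, IccExtend_of_mem, hv, max_eq_right (sub_nonpos.2 hv.2)]

lemma truncation_of_nonpos (hR : 0 ≤ R) (hv : v ≤ 0) : truncation g hR κ v = g 0 := by
  simp [truncation, IccExtend_of_le_left, hv, max_eq_right (sub_nonpos.2 (hv.trans hR))]

lemma truncation_of_le (hR : 0 ≤ R) (hv : R ≤ v) :
    truncation g hR κ v = g R + κ * (v - R) := by
  simp [truncation, IccExtend_of_right_le, hv]

lemma lipschitzWith_truncation {L : NNReal} (hR : 0 ≤ R) (hg : LipschitzOnWith L g (Icc 0 R)) :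
    LipschitzWith (L + κ) (truncation g hR κ) := by
  have hclamp := hg.to_restrict.comp (LipschitzWith.projIcc hR)
  have htail := (lipschitzWith_smul (κ : ℝ)).comp
    ((LipschitzWith.id.sub (LipschitzWith.const R)).max_const 0)
  exact (hclamp.add htail).weaken (by simp)

lemma mul_le_truncation (hR : 0 ≤ R) {v₀ : ℝ} (hv₀ : v₀ ∈ Icc 0 R)
    (hg : ∀ v ∈ Icc v₀ R, κ * v ≤ g v) (hv : v₀ ≤ v) : κ * v ≤ truncation g hR κ v := by
  rcases le_total v R with hvR | hRv
  · rw [truncation_of_mem hR ⟨hv₀.1.trans hv, hvR⟩]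
    exact hg v ⟨hv, hvR⟩
  · rw [truncation_of_le hR hRv]
    linarith [hg R ⟨hv₀.2, le_rfl⟩]

namespace SuperlinearNonlinearity

lemma truncation_nonneg (hg : SuperlinearNonlinearity g) (hR : 0 ≤ R) (v : ℝ) :
    0 ≤ truncation g hR κ v := by
  have hnn (r : ℝ) (hr : 0 ≤ r) : 0 ≤ g r :=
    hr.eq_or_lt.elim (fun heq => heq ▸ hg.zero.ge) fun hlt => (hg.pos r hlt).le
  exact add_nonneg (hnn _ (projIcc 0 R hR v).2.1)
    (mul_nonneg κ.2 (le_max_right _ _))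

lemma exists_pos_le_truncation (hg : SuperlinearNonlinearity g) (hR : 0 < R) {d : ℝ}
    (hd : 0 < d) : ∃ γ > 0, ∀ v, d ≤ v → γ ≤ truncation g hR.le κ v := by
  obtain ⟨L, hL⟩ := hg.lipschitz R
  have hdR : 0 < min d R := lt_min hd hR
  obtain ⟨p, hp, hmin⟩ := isCompact_Icc.exists_isMinOn (nonempty_Icc.2 (min_le_right d R))
    (hL.continuousOn.mono (Icc_subset_Icc_left hdR.le))
  refine ⟨g p, hg.pos p (hdR.trans_le hp.1), fun v hv => ?_⟩
  rcases le_total v R with hvR | hRv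
  · rw [truncation_of_mem hR.le ⟨hd.le.trans hv, hvR⟩]
    exact hmin ⟨min_le_of_left_le hv, hvR⟩
  · rw [truncation_of_le hR.le hRv]
    exact (hmin ⟨min_le_right d R, le_rfl⟩).trans
      (le_add_of_nonneg_right (mul_nonneg κ.2 (sub_nonneg.2 hRv)))

lemma exists_forall_le_mul (hg : SuperlinearNonlinearity g) {η : ℝ} (hη : 0 < η) :
    ∃ d > 0, ∀ v ∈ Icc 0 d, g v ≤ η * v := by
  obtain ⟨d, hd, hsub⟩ := mem_nhdsGT_iff_exists_Ioc_subset.1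
    (hg.tendsto_zero.eventually (gt_mem_nhds hη))
  refine ⟨d, hd, fun v hv => ?_⟩
  rcases hv.1.eq_or_lt with rfl | hpos
  · rw [hg.zero, mul_zero]
  · exact ((div_lt_iff₀ hpos).1 (hsub ⟨hpos, hv.2⟩)).le

lemma exists_forall_mul_le (hg : SuperlinearNonlinearity g) (η : ℝ) :
    ∃ v₀ > 0, ∀ v, v₀ ≤ v → η * v ≤ g v := by
  obtain ⟨v₀, hv₀, hsub⟩ := (atTop_basis_Ioi' 0).eventually_iff.1
    (hg.tendsto_atTop.eventually (eventually_ge_atTop η))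
  refine ⟨v₀ + 1, by linarith, fun v hv => ?_⟩
  exact (le_div_iff₀ (by linarith)).1 (hsub (show v₀ < v by linarith))

theorem exists_shootingScales (hg : SuperlinearNonlinearity g) {T A κ δ : ℝ} (hA : 0 < A)
    (hκ : 0 < κ) (hδ : 0 < δ) (hδT : δ ≤ T) :
    ∃ (h : ℝ → ℝ) (K : NNReal) (G : ShootingScales h K T A κ δ), LipschitzWith K h ∧
      (∀ v ≤ 0, h v = 0) ∧ (∀ v, 0 ≤ h v) ∧ ∀ v ∈ Icc 0 G.R, h v = g v := by
  have hT : 0 < T := hδ.trans_le hδT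
  obtain ⟨κ₁, hκ₁⟩ : ∃ κ₁ : NNReal, (κ₁ : ℝ) = 3 * T / (κ * δ ^ 2) := ⟨⟨_, by positivity⟩, rfl⟩
  obtain ⟨v₀, hv₀, hlarge⟩ := hg.exists_forall_mul_le κ₁
  set R := v₀ * T / δ with hR_def
  have hR : 0 < R := by positivity
  have hv₀R : v₀ ≤ R := by rw [hR_def, le_div_iff₀ hδ]; gcongr
  obtain ⟨L, hL⟩ := hg.lipschitz R
  obtain ⟨d, hd, hsmall⟩ := hg.exists_forall_le_mul (η := 1 / (4 * A * T)) (by positivity)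
  set Y := min d R / (2 * T) with hY_def
  have hdR : 0 < min d R := lt_min hd hR
  have hY : 0 < Y := div_pos hdR (by positivity)
  have hYd : 2 * T * Y = min d R := by rw [hY_def]; field_simp
  obtain ⟨γ, hγ, hγ_le⟩ := hg.exists_pos_le_truncation (κ := κ₁) hR
    (show 0 < Y * δ / 8 * δ / T by positivity)
  refine ⟨truncation g hR.le κ₁, L + κ₁,
    { ε := Y * δ / 8, Y := Y, R := R, Ymax := _, γ := γ, A_pos := hA, κ_pos := hκ
      ε_pos := by positivity
      γ_pos := hγ
      ε_le := by linarith
      mul_le_R := by nlinarith [min_le_right d R]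
      le_Ymax := le_rfl
      small := fun v hv => ?_
      large := fun v hv => ?_
      γ_le := hγ_le },
    lipschitzWith_truncation hR.le hL,
    fun v hv => (truncation_of_nonpos hR.le hv).trans hg.zero,
    hg.truncation_nonneg hR.le, fun v hv => truncation_of_mem hR.le hv⟩
  · rw [hYd] at hv
    rw [truncation_of_mem hR.le ⟨hv.1, hv.2.trans (min_le_right d R)⟩]
    have hgv := hsmall v ⟨hv.1, hv.2.trans (min_le_left d R)⟩
    rw [one_div_mul_eq_div, le_div_iff₀ (by positivity)] at hgv
    linarith
  · rw [show δ * R / T = v₀ by rw [hR_def]; field_simp] at hv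
    have hhv := mul_le_truncation hR.le ⟨hv₀.le, hv₀R⟩ (fun r hr => hlarge r hr.1) hv
    rw [hκ₁, div_mul_eq_mul_div, div_le_iff₀ (by positivity)] at hhv
    linarith

end SuperlinearNonlinearity

end Truncation

section SignPartition

/-- The time after which the mass of `a` on the rest of `[p, q]` vanishes: where `a ≤ 0`, this is
the right end of the essential support of `a` in `[p, q]`. -/
noncomputable def effectiveEnd (a : ℝ → ℝ) (p q : ℝ) : ℝ :=
  sInf {c | c ∈ Icc p q ∧ ∫ t in c..q, a t = 0}

variable {a : ℝ → ℝ} {p q c : ℝ}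

lemma isLeast_effectiveEnd (ha : ∀ p q, IntervalIntegrable a volume p q) (hpq : p ≤ q) :
    IsLeast {c | c ∈ Icc p q ∧ ∫ t in c..q, a t = 0} (effectiveEnd a p q) := by
  have hcont : Continuous fun c => ∫ t in c..q, a t := by
    simp only [intervalIntegral.integral_symm q]
    exact (intervalIntegral.continuous_primitive ha q).neg
  have hcomp : IsCompact {c | c ∈ Icc p q ∧ ∫ t in c..q, a t = 0} :=
    isCompact_Icc.inter_right (isClosed_eq hcont continuous_const)
  exact hcomp.isLeast_sInf ⟨q, ⟨hpq, le_rfl⟩, intervalIntegral.integral_same⟩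

lemma effectiveEnd_add_period (ha : ∀ p q, IntervalIntegrable a volume p q) (hpq : p ≤ q) {d : ℝ}
    (hd : Function.Periodic a d) : effectiveEnd a (p + d) (q + d) = effectiveEnd a p q + d := by
  have hleast := isLeast_effectiveEnd ha hpq
  have hleast' := isLeast_effectiveEnd ha (add_le_add_left hpq d)
  refine hleast'.unique ⟨⟨?_, (integral_add_period hd).trans hleast.1.2⟩, fun c hc => ?_⟩
  · exact ⟨add_le_add_left hleast.1.1.1 d, add_le_add_left hleast.1.1.2 d⟩
  · refine le_sub_iff_add_le.1 (hleast.2 ⟨⟨le_sub_iff_add_le.2 hc.1.1, sub_le_iff_le_add.2 hc.1.2⟩,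
      ?_⟩)
    rw [← integral_add_period hd, sub_add_cancel, hc.2]

lemma integral_effectiveEnd_neg (ha : ∀ p q, IntervalIntegrable a volume p q) (hpq : p ≤ q)
    (hneg : ∀ᵐ t ∂volume.restrict (Icc p q), a t ≤ 0) (hc : c ∈ Ico p (effectiveEnd a p q)) :
    ∫ t in c..effectiveEnd a p q, a t < 0 := by
  have hleast := isLeast_effectiveEnd ha hpq
  have hcq : c ≤ q := hc.2.le.trans hleast.1.1.2
  have hadd := intervalIntegral.integral_add_adjacent_intervals
    (ha c (effectiveEnd a p q)) (ha _ q)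
  rw [hleast.1.2, add_zero] at hadd
  rw [hadd]
  have hnonneg := intervalIntegral.integral_nonneg_of_ae_restrict hcq
    ((ae_restrict_Icc_mono hneg hc.1 le_rfl).mono fun _ => neg_nonneg.2)
  rw [intervalIntegral.integral_neg, neg_nonneg] at hnonneg
  exact hnonneg.lt_of_ne fun h0 => hc.2.not_ge (hleast.2 ⟨⟨hc.1, hcq⟩, h0⟩)

lemma ae_eq_zero_of_effectiveEnd (ha : ∀ p q, IntervalIntegrable a volume p q) (hpq : p ≤ q)
    (hneg : ∀ᵐ t ∂volume.restrict (Icc p q), a t ≤ 0) :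
    ∀ᵐ t ∂volume.restrict (Icc (effectiveEnd a p q) q), a t = 0 := by
  have hleast := isLeast_effectiveEnd ha hpq
  by_contra h0
  have hpos : PosOn (fun t => -a t) (Icc (effectiveEnd a p q) q) :=
    ⟨(ae_restrict_Icc_mono hneg hleast.1.1.1 le_rfl).mono fun t => neg_nonneg.2,
      by simpa only [neg_eq_zero] using h0⟩
  have := hpos.integral_pos hleast.1.1.2 (ha _ _).neg
  rw [intervalIntegral.integral_neg, hleast.1.2, neg_zero] at this
  exact this.false

/-- The points `ρ n` cut the half-line `[ρ 0, ∞)` into intervals on which the `T`-periodic function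
`a` is alternately `≺ 0` and `≻ 0`, with `m` intervals of each kind in a period. -/
structure SignPartition (a : ℝ → ℝ) (T : ℝ) (m : ℕ) (ρ : ℕ → ℝ) : Prop where
  intervalIntegrable : ∀ p q, IntervalIntegrable a volume p q
  periodic : Function.Periodic a T
  ne_zero : m ≠ 0
  lt_succ : ∀ n, ρ n < ρ (n + 1)
  add_period : ∀ n, ρ (n + 2 * m) = ρ n + T
  negOn : ∀ n, PosOn (fun t => -a t) (Icc (ρ (2 * n)) (ρ (2 * n + 1)))
  posOn : ∀ n, PosOn a (Icc (ρ (2 * n + 1)) (ρ (2 * n + 2)))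

lemma forall_Icc_of_add {T : ℝ} {m : ℕ} {σ : ℕ → ℝ} {P : Set ℝ → Prop}
    (hP : ∀ p q, P (Icc p q) → P (Icc (p + T) (q + T))) (hm : m ≠ 0)
    (hσ : ∀ n, σ (n + 2 * m) = σ n + T) (l : ℕ)
    (h : ∀ n < m, P (Icc (σ (2 * n + l)) (σ (2 * n + l + 1)))) :
    ∀ n, P (Icc (σ (2 * n + l)) (σ (2 * n + l + 1))) := by
  refine forall_of_add hm (fun n hn => ?_) h
  have hadd (j : ℕ) : σ (2 * (n + m) + j) = σ (2 * n + j) + T := by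
    rw [← hσ, mul_add, add_right_comm]
  rw [add_assoc, hadd, hadd]
  exact hP _ _ hn

theorem exists_signPartition {T : ℝ} {m : ℕ} {σ : ℕ → ℝ} (hm : m ≠ 0)
    (ha : LocallyIntegrable a volume) (haT : Function.Periodic a T)
    (hσT : σ (2 * m) = σ 0 + T) (hσ : ∀ i < 2 * m, σ i < σ (i + 1))
    (hpos : ∀ i < m, PosOn a (Icc (σ (2 * i)) (σ (2 * i + 1))))
    (hneg : ∀ i < m, PosOn (fun t => -a t) (Icc (σ (2 * i + 1)) (σ (2 * i + 2)))) :
    ∃ ρ, SignPartition a T m ρ ∧ ∀ j < 2 * m, ρ (j + 1) = σ j := by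
  obtain ⟨M, rfl⟩ : ∃ M, m = M + 1 := Nat.exists_eq_succ_of_ne_zero hm
  have hnegT : Function.Periodic (fun t => -a t) T := haT.comp Neg.neg
  obtain ⟨σ', hadd, hσ'⟩ := exists_quasiperiodic_extension (N := 2 * (M + 1)) (by omega) hσT
  have hlt : ∀ n, σ' n < σ' (n + 1) := by
    refine forall_of_add (m := 2 * (M + 1)) (by omega) (fun n hn => ?_) fun n hn => ?_
    · rw [add_right_comm, hadd, hadd]
      exact add_lt_add_left hn T
    · rw [hσ' n hn.le, hσ' (n + 1) hn]
      exact hσ n hn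
  have hpos' := forall_Icc_of_add (fun _ _ => posOn_Icc_add haT) hm hadd 0
    fun n hn => by
      rw [hσ' _ (by omega), hσ' _ (by omega)]
      exact hpos n hn
  have hneg' := forall_Icc_of_add (fun _ _ => posOn_Icc_add hnegT) hm hadd 1
    fun n hn => by
      rw [hσ' _ (by omega), hσ' _ (by omega)]
      exact hneg n hn
  have hρ (j : ℕ) : σ' (j + 1 + 2 * M + 1) - T = σ' j := by
    rw [sub_eq_iff_eq_add, ← hadd]; congr 1; ring
  refine ⟨fun n => σ' (n + 2 * M + 1) - T, ⟨fun p q => ?_, haT, hm, fun n => ?_, fun n => ?_,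
    fun n => ?_, fun n => ?_⟩, fun j hj => (hρ j).trans (hσ' j hj.le)⟩
  · exact (ha.integrableOn_isCompact isCompact_uIcc).intervalIntegrable
  · rw [add_right_comm n 1, add_right_comm _ 1]
    exact sub_lt_sub_right (hlt _) T
  · rw [show n + 2 * (M + 1) + 2 * M + 1 = n + 2 * M + 1 + 2 * (M + 1) by ring, hadd]
    ring
  · have hn := posOn_Icc_add hnegT.neg (hneg' (n + M))
    simpa only [mul_add, add_right_comm _ 1, ← sub_eq_add_neg] using hn
  · simpa only [hρ, add_zero] using hpos' n

namespace SignPartition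

variable {T : ℝ} {m n : ℕ} {ρ : ℕ → ℝ}

/-- The time at which the `n`-th shooting interval starts: the effective end of the negative
interval that precedes the `n`-th positive one. -/
noncomputable def start (_ : SignPartition a T m ρ) (n : ℕ) : ℝ :=
  effectiveEnd a (ρ (2 * n)) (ρ (2 * n + 1))

variable (Z : SignPartition a T m ρ)

lemma add_mul_period (Z : SignPartition a T m ρ) (n k : ℕ) : ρ (n + 2 * (k * m)) = ρ n + k * T := by
  rw [← add_mul_of_add Z.add_period, Nat.mul_left_comm]

lemma nonpos (Z : SignPartition a T m ρ) (n : ℕ) :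
    ∀ᵐ t ∂volume.restrict (Icc (ρ (2 * n)) (ρ (2 * n + 1))), a t ≤ 0 :=
  (Z.negOn n).1.mono fun _ => neg_nonneg.1

lemma start_add (n : ℕ) : Z.start (n + m) = Z.start n + T := by
  rw [start, start, mul_add, add_right_comm, Z.add_period, Z.add_period,
    effectiveEnd_add_period Z.intervalIntegrable (Z.lt_succ _).le Z.periodic]

lemma start_le (n : ℕ) : Z.start n ≤ ρ (2 * n + 1) :=
  (isLeast_effectiveEnd Z.intervalIntegrable (Z.lt_succ _).le).1.1.2

lemma lt_start (n : ℕ) : ρ (2 * n) < Z.start n := by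
  have hleast := isLeast_effectiveEnd Z.intervalIntegrable (Z.lt_succ (2 * n)).le
  refine hleast.1.1.1.lt_of_ne fun heq => ?_
  have hpos := (Z.negOn n).integral_pos (Z.lt_succ _).le (Z.intervalIntegrable _ _).neg
  rw [intervalIntegral.integral_neg, heq, hleast.1.2, neg_zero] at hpos
  exact hpos.false

lemma start_lt (n : ℕ) : Z.start n < ρ (2 * n + 2) :=
  (Z.start_le n).trans_lt (Z.lt_succ _)

lemma sub_start_le (n : ℕ) : ρ (2 * n + 2) - Z.start n ≤ T := by
  have hmono : Monotone ρ := (strictMono_nat_of_lt_succ Z.lt_succ).monotone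
  have hle : ρ (2 * n + 2) ≤ ρ (2 * n + 2 * m) := hmono (by have := Z.ne_zero; omega)
  rw [Z.add_period] at hle
  linarith [Z.lt_start n]

lemma ae_eq_zero (n : ℕ) : ∀ᵐ t ∂volume.restrict (Icc (Z.start n) (ρ (2 * n + 1))), a t = 0 :=
  ae_eq_zero_of_effectiveEnd Z.intervalIntegrable (Z.lt_succ _).le (Z.nonpos n)

lemma nonneg (n : ℕ) : ∀ᵐ t ∂volume.restrict (Icc (Z.start n) (ρ (2 * n + 2))), 0 ≤ a t := by
  rw [← Icc_union_Icc_eq_Icc (Z.start_le n) (Z.lt_succ _).le, ae_restrict_union_iff]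
  exact ⟨(Z.ae_eq_zero n).mono fun _ h => h.ge, (Z.posOn n).1⟩

lemma integral_pos (n : ℕ) : 0 < ∫ t in Z.start n..ρ (2 * n + 2), a t := by
  rw [← intervalIntegral.integral_add_adjacent_intervals (Z.intervalIntegrable _ (ρ (2 * n + 1)))
    (Z.intervalIntegrable _ _)]
  exact add_pos_of_nonneg_of_pos (intervalIntegral.integral_nonneg_of_ae_restrict (Z.start_le n)
      ((Z.ae_eq_zero n).mono fun _ h => h.ge))
    ((Z.posOn n).integral_pos (Z.lt_succ _).le (Z.intervalIntegrable _ _))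

lemma integral_neg {c : ℝ} (hc : c ∈ Ico (ρ (2 * n)) (Z.start n)) :
    ∫ t in c..Z.start n, a t < 0 :=
  integral_effectiveEnd_neg Z.intervalIntegrable (Z.lt_succ _).le (Z.nonpos n) hc

end SignPartition

end SignPartition

section Weight

/-- The weight `a⁺ - μ a⁻`. -/
def weight (a : ℝ → ℝ) (μ t : ℝ) : ℝ :=
  max (a t) 0 - μ * max (-a t) 0

variable {a : ℝ → ℝ} {μ p q d t : ℝ}

lemma weight_of_nonneg (h : 0 ≤ a t) : weight a μ t = a t := by
  simp [weight, h]

lemma weight_of_nonpos (h : a t ≤ 0) : weight a μ t = μ * a t := by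
  simp [weight, h]

lemma periodic_weight (ha : Function.Periodic a d) : Function.Periodic (weight a μ) d :=
  ha.comp fun v => max v 0 - μ * max (-v) 0

lemma intervalIntegrable_weight (ha : IntervalIntegrable a volume p q) :
    IntervalIntegrable (weight a μ) volume p q :=
  ⟨ha.1.pos_part.sub (ha.1.neg_part.const_mul μ), ha.2.pos_part.sub (ha.2.neg_part.const_mul μ)⟩

lemma integral_weight_of_nonneg (hpq : p ≤ q)
    (ha : ∀ᵐ t ∂volume.restrict (Icc p q), 0 ≤ a t) :
    ∫ t in p..q, weight a μ t = ∫ t in p..q, a t := by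
  refine intervalIntegral.integral_congr_ae_restrict ?_
  rw [uIoc_of_le hpq, restrict_Ioc_eq_restrict_Icc]
  exact ha.mono fun _ => weight_of_nonneg

lemma integral_weight_of_nonpos (hpq : p ≤ q)
    (ha : ∀ᵐ t ∂volume.restrict (Icc p q), a t ≤ 0) :
    ∫ t in p..q, weight a μ t = μ * ∫ t in p..q, a t := by
  rw [← intervalIntegral.integral_const_mul]
  refine intervalIntegral.integral_congr_ae_restrict ?_
  rw [uIoc_of_le hpq, restrict_Ioc_eq_restrict_Icc]
  exact ha.mono fun _ => weight_of_nonpos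

variable {h : ℝ → ℝ} {K : NNReal} {T A κ δ τ c s' : ℝ} {m n : ℕ} {ρ : ℕ → ℝ}

lemma Barrier.add_period {b : ℝ → ℝ} {G : ShootingScales h K T A κ δ} (B : Barrier b G τ c s')
    (hb : Function.Periodic b d) : Barrier b G (τ + d) (c + d) (s' + d) where
  le_start := add_le_add_left B.le_start d
  start_le := add_le_add_left B.start_le d
  mul_sub_le := by simpa using B.mul_sub_le
  integral_lt := by simpa only [integral_add_period hb] using B.integral_lt

lemma eventually_exists_barrier (G : ShootingScales h K T A κ δ) (hY : 0 < G.Ymax) (hτ : τ < s')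
    (hnonpos : ∀ᵐ t ∂volume.restrict (Icc τ s'), a t ≤ 0)
    (hneg : ∀ c ∈ Ico τ s', ∫ t in c..s', a t < 0) :
    ∀ᶠ μ in atTop, ∃ c, Barrier (weight a μ) G τ c s' := by
  have hη : 0 < G.ε / (2 * G.Ymax) := div_pos G.ε_pos (by positivity)
  obtain ⟨c, hτc, hcs, hc⟩ : ∃ c, τ ≤ c ∧ c < s' ∧ s' - c ≤ G.ε / (2 * G.Ymax) :=
    ⟨max τ (s' - G.ε / (2 * G.Ymax)), le_max_left _ _, max_lt hτ (sub_lt_self _ hη),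
      sub_le_comm.1 (le_max_right _ _)⟩
  have hmass : G.γ * ∫ t in c..s', a t < 0 := mul_neg_of_pos_of_neg G.γ_pos (hneg c ⟨hτc, hcs⟩)
  filter_upwards [(tendsto_id.atTop_mul_const_of_neg hmass).eventually_lt_atBot (-G.rise)]
    with μ hμ
  refine ⟨c, hτc, hcs.le, ?_, ?_⟩
  · rw [le_div_iff₀ (by positivity)] at hc
    linarith
  · rw [integral_weight_of_nonpos hcs.le (ae_restrict_Icc_mono hnonpos hτc le_rfl)]
    rwa [mul_left_comm]

namespace SignPartition

lemma two_mul_add_period (Z : SignPartition a T m ρ) (n l : ℕ) :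
    ρ (2 * (n + m) + l) = ρ (2 * n + l) + T := by
  rw [← Z.add_period, mul_add, add_right_comm]

lemma exists_collar (Z : SignPartition a T m ρ) :
    ∃ δ > 0, ∀ n, Z.start n + δ ≤ ρ (2 * n + 2) - δ ∧
      0 < ∫ t in (Z.start n + δ)..(ρ (2 * n + 2) - δ), a t := by
  suffices ∀ᶠ δ in nhdsWithin 0 (Ioi 0), ∀ n, Z.start n + δ ≤ ρ (2 * n + 2) - δ ∧
      0 < ∫ t in (Z.start n + δ)..(ρ (2 * n + 2) - δ), a t by
    obtain ⟨δ, hδ, hpos⟩ := (this.and self_mem_nhdsWithin).exists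
    exact ⟨δ, hpos, hδ⟩
  refine eventually_forall_of_add Z.ne_zero (fun n δ hδ => ?_) fun n => ?_
  · rw [Z.start_add, Z.two_mul_add_period, add_right_comm, add_sub_right_comm,
      integral_add_period Z.periodic]
    exact ⟨add_le_add_left hδ.1 T, hδ.2⟩
  · have hcont : Continuous fun δ => ∫ t in (Z.start n + δ)..(ρ (2 * n + 2) - δ), a t := by
      have hprim := intervalIntegral.continuous_primitive Z.intervalIntegrable 0
      have hsub (δ : ℝ) := intervalIntegral.integral_interval_sub_left
        (Z.intervalIntegrable 0 (ρ (2 * n + 2) - δ)) (Z.intervalIntegrable 0 (Z.start n + δ))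
      simp only [← hsub]
      exact (hprim.comp (by fun_prop)).sub (hprim.comp (by fun_prop))
    have hlt : ∀ᶠ δ in nhds 0, Z.start n + δ < ρ (2 * n + 2) - δ :=
      ContinuousAt.eventually_lt (by fun_prop) (by fun_prop) (by simpa using Z.start_lt n)
    have hpos := (hcont.tendsto 0).eventually_const_lt (u := 0)
      (by simpa using Z.integral_pos n)
    exact nhdsWithin_le_nhds ((hlt.mono fun _ => le_of_lt).and hpos)

theorem exists_hump_constants (Z : SignPartition a T m ρ) :
    ∃ A κ δ : ℝ, 0 < A ∧ 0 < κ ∧ ∀ μ, 0 ≤ μ →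
      ∀ n, Hump (weight a μ) T A κ δ (Z.start n) (ρ (2 * n + 2)) (Z.start (n + 1)) := by
  obtain ⟨δ, hδ, hcollar⟩ := Z.exists_collar
  have hA_ev : ∀ᶠ A in atTop, ∀ n, ∫ t in Z.start n..ρ (2 * n + 2), a t ≤ A := by
    refine eventually_forall_of_add Z.ne_zero (fun n A hA => ?_) fun n => eventually_ge_atTop _
    rwa [Z.start_add, Z.two_mul_add_period, integral_add_period Z.periodic]
  obtain ⟨A, hA_le, hA⟩ := (hA_ev.and (eventually_gt_atTop 0)).exists
  have hκ_ev : ∀ᶠ κ in nhdsWithin 0 (Ioi 0),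
      ∀ n, κ ≤ ∫ t in (Z.start n + δ)..(ρ (2 * n + 2) - δ), a t := by
    refine eventually_forall_of_add Z.ne_zero (fun n κ hκ => ?_) fun n =>
      nhdsWithin_le_nhds (eventually_le_nhds (hcollar n).2)
    rwa [Z.start_add, Z.two_mul_add_period, add_right_comm, add_sub_right_comm,
      integral_add_period Z.periodic]
  obtain ⟨κ, hκ_le, hκ⟩ := (hκ_ev.and self_mem_nhdsWithin).exists
  refine ⟨A, κ, δ, hA, hκ, fun μ hμ n => ?_⟩
  exact
  { delta_pos := hδ
    collar := (hcollar n).1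
    le_end := (Z.lt_start (n + 1)).le
    sub_le := Z.sub_start_le n
    nonneg := (Z.nonneg n).mono fun t ht => (weight_of_nonneg ht).symm ▸ ht
    nonpos := (ae_restrict_Icc_mono (Z.nonpos (n + 1)) le_rfl (Z.start_le _)).mono fun t ht =>
      (weight_of_nonpos ht).trans_le (mul_nonpos_of_nonneg_of_nonpos hμ ht)
    integral_le := (integral_weight_of_nonneg (Z.start_lt n).le (Z.nonneg n)).trans_le (hA_le n)
    le_integral := (hκ_le n).trans_eq (integral_weight_of_nonneg (hcollar n).1
      (ae_restrict_Icc_mono (Z.nonneg n) (by linarith) (by linarith))).symm }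

theorem eventually_exists_humpTrain (Z : SignPartition a T m ρ)
    (hH : ∀ μ, 0 ≤ μ →
      ∀ n, Hump (weight a μ) T A κ δ (Z.start n) (ρ (2 * n + 2)) (Z.start (n + 1)))
    (G : ShootingScales h K T A κ δ) :
    ∀ᶠ μ in atTop, ∃ c, HumpTrain (weight a μ) G m Z.start (fun n => ρ (2 * n + 2)) c := by
  have hY : 0 < G.Ymax := ((hH 0 le_rfl 0).Y_pos G).trans_le ((hH 0 le_rfl 0).Y_le_Ymax G)
  have hbarrier : ∀ᶠ μ in atTop, ∀ n,
      ∃ c, Barrier (weight a μ) G (ρ (2 * n + 2)) c (Z.start (n + 1)) := by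
    refine eventually_forall_of_add Z.ne_zero ?_ fun n => ?_
    · rintro n μ ⟨c, B⟩
      rw [Z.two_mul_add_period, add_right_comm, Z.start_add]
      exact ⟨c + T, B.add_period (periodic_weight Z.periodic)⟩
    · exact eventually_exists_barrier G hY (Z.lt_start (n + 1))
        (ae_restrict_Icc_mono (Z.nonpos (n + 1)) le_rfl (Z.start_le _))
        fun c => Z.integral_neg (n := n + 1)
  filter_upwards [hbarrier, eventually_ge_atTop 0] with μ hB hμ
  choose c hc using hB
  exact ⟨c, hH μ hμ, hc, periodic_weight Z.periodic, Z.start_add⟩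

end SignPartition

end Weight

section Coding

lemma exists_finset_card_of_codes {α : Type*} {N : ℕ} {P : α → Prop} {M : ℕ → α → ℝ} {r : ℝ}
    (h : ∀ S : ℕ → Bool, (∃ j < N, S j = true) →
      ∃ u, P u ∧ ∀ j < N, (S j = false → M j u < r) ∧ (S j = true → r < M j u)) :
    ∃ U : Finset α, 2 ^ N - 1 ≤ U.card ∧ ∀ u ∈ U, P u := by
  classical
  have hcode : SurjOn (fun u => {j ∈ Finset.range N | r < M j u}) {u | P u}
      ((Finset.range N).powerset.erase ∅) := by
    intro B hB
    obtain ⟨hne, hsub⟩ := Finset.mem_erase.1 hB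
    rw [Finset.mem_powerset] at hsub
    obtain ⟨i, hi⟩ := Finset.nonempty_of_ne_empty hne
    obtain ⟨u, hu, hcode⟩ := h (fun j => decide (j ∈ B))
      ⟨i, Finset.mem_range.1 (hsub hi), decide_eq_true hi⟩
    refine ⟨u, hu, Finset.ext fun j => ?_⟩
    rw [Finset.mem_filter, Finset.mem_range]
    refine ⟨fun hj => ?_, fun hj => ?_⟩
    · by_contra hjB
      exact lt_asymm hj.2 ((hcode j hj.1).1 (decide_eq_false hjB))
    · have hjN := Finset.mem_range.1 (hsub hj)
      exact ⟨hjN, (hcode j hjN).2 (decide_eq_true hj)⟩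
  obtain ⟨U, hUP, hinj, himage⟩ := Finset.exists_subset_injOn_image_eq_of_surjOn _ _ hcode
  refine ⟨U, ?_, fun u hu => hUP hu⟩
  rw [← Finset.card_image_of_injOn hinj, himage,
    Finset.card_erase_of_mem (Finset.empty_mem_powerset _), Finset.card_powerset,
    Finset.card_range]

lemma exists_periodic_extension {N : ℕ} (S : ℕ → Bool) (hS : ∃ j < N, S j = true) :
    ∃ S' : ℕ → Bool, Function.Periodic S' N ∧ (∀ n < N, S' n = S n) ∧
      ∃ᶠ n in atTop, S' n = true := by
  obtain ⟨j, hj, hSj⟩ := hS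
  refine ⟨fun n => S (n % N), fun n => by simp, fun n hn => by simp [Nat.mod_eq_of_lt hn],
    frequently_atTop.2 fun n => ⟨j + n * N, ?_, ?_⟩⟩
  · nlinarith
  · simpa [Nat.mod_eq_of_lt hj] using hSj

end Coding

section Solutions

lemma SecondOrderSol.isSol {b g h u w : ℝ → ℝ} (F : SecondOrderSol b h u w)
    (hb : ∀ p q, IntervalIntegrable b volume p q) (hh : Continuous h)
    (hgh : ∀ t, h (u t) = g (u t)) : IsSol (fun t v => b t * g v) u := by
  simp only [IsSol, ← hgh]
  exact ⟨w, F.hasDerivAt, fun t => ⟨Ioc (t - 1) (t + 1), Ioc_mem_nhds (by simp) (by simp),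
    (F.intervalIntegrable hb hh (t - 1) (t + 1)).1⟩, F.deriv_eq 0⟩

lemma sSup_image_Icc_mem {u : ℝ → ℝ} {p q : ℝ} (hu : Continuous u) (hpq : p ≤ q) :
    sSup (u '' Icc p q) ∈ u '' Icc p q :=
  (isCompact_Icc.image hu).sSup_mem ((nonempty_Icc.2 hpq).image u)

variable {a g h : ℝ → ℝ} {K : NNReal} {T A κ δ μ : ℝ} {m k : ℕ} {ρ c : ℕ → ℝ}

/-- `u` is a positive `kT`-periodic solution of `u'' + (a⁺ - μ a⁻) g(u) = 0`. -/
def IsPositivePeriodicSol (a g : ℝ → ℝ) (μ T : ℝ) (k : ℕ) (u : ℝ → ℝ) : Prop :=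
  IsSol (fun t v => weight a μ t * g v) u ∧ (∀ t, 0 < u t) ∧ Function.Periodic u (k * T)

namespace SignPartition

theorem exists_coded_solution (Z : SignPartition a T m ρ) {G : ShootingScales h K T A κ δ}
    (Q : HumpTrain (weight a μ) G m Z.start (fun n => ρ (2 * n + 2)) c)
    (P : TruncatedProblem (weight a μ) h K) (hgh : ∀ v ∈ Icc 0 G.R, h v = g v)
    (S : ℕ → Bool) (hS : ∃ j < k * m, S j = true) :
    ∃ u, IsPositivePeriodicSol a g μ T k u ∧ ∀ n < k * m,
      (S n = false → sSup (u '' Icc (ρ (2 * n + 1)) (ρ (2 * n + 2))) < G.Y * δ / 2) ∧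
      (S n = true → sSup (u '' Icc (ρ (2 * n + 1)) (ρ (2 * n + 2))) ∈ Ioo (G.Y * δ / 2) G.R) := by
  obtain ⟨S', hS', hSS', hfreq⟩ := exists_periodic_extension S hS
  have hN : k * m ≠ 0 := by
    obtain ⟨j, hj, -⟩ := hS
    exact Nat.ne_zero_of_lt hj
  obtain ⟨u, w, F, hu, hmem⟩ := Q.exists_followsItinerary_mem_Ioo P hN hS' hfreq
  have hsol := F.sol.isSol P.intervalIntegrable P.lipschitz.continuous fun t =>
    hgh _ (Ioo_subset_Icc_self (hmem t))
  refine ⟨u, ⟨hsol, fun t => (hmem t).1, hu⟩, fun n hn => ?_⟩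
  rw [← hSS' n hn]
  have hstart : Z.start n ≤ ρ (2 * n + 1) := Z.start_le n
  have hend : ρ (2 * n + 1) ≤ ρ (2 * n + 2) := (Z.lt_succ _).le
  have hmax := sSup_image_Icc_mem F.sol.continuous hend
  refine ⟨fun hfalse => ?_, fun htrue => ⟨?_, ?_⟩⟩
  · obtain ⟨t, ht, heq⟩ := hmax
    have hle := F.apply_le_of_eq_false P Q hfalse ⟨hstart.trans ht.1, ht.2⟩
    linarith [G.ε_le, G.ε_pos]
  · have hb : ∀ᵐ t ∂volume.restrict (Icc (Z.start n) (ρ (2 * n + 1))), weight a μ t ≤ 0 :=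
      (Z.ae_eq_zero n).mono fun t ht => by simp [weight, ht]
    obtain ⟨t, ht, hlt⟩ := F.exists_lt_apply_of_eq_true P Q htrue ⟨hstart, hend⟩ hb
    exact hlt.trans_le
      (le_csSup (isCompact_Icc.image F.sol.continuous).bddAbove (mem_image_of_mem u ht))
  · obtain ⟨t, -, heq⟩ := hmax
    exact heq ▸ (hmem t).2

theorem exists_coded_solutions (Z : SignPartition a T m ρ) (hg : SuperlinearNonlinearity g) :
    ∃ r R μ₀ : ℝ, 0 < r ∧ r < R ∧ 0 < μ₀ ∧ ∀ μ, μ₀ < μ → ∀ (k : ℕ) (S : ℕ → Bool),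
      (∃ j < k * m, S j = true) → ∃ u, IsPositivePeriodicSol a g μ T k u ∧ ∀ n < k * m,
        (S n = false → sSup (u '' Icc (ρ (2 * n + 1)) (ρ (2 * n + 2))) < r) ∧
        (S n = true → sSup (u '' Icc (ρ (2 * n + 1)) (ρ (2 * n + 2))) ∈ Ioo r R) := by
  obtain ⟨A, κ, δ, hA, hκ, hH⟩ := Z.exists_hump_constants
  have h₀ := hH 0 le_rfl 0
  have hδ : 0 < δ := h₀.delta_pos
  have h2δ : 2 * δ ≤ T := h₀.two_mul_le_period
  obtain ⟨h, K, G, hlip, hzero, hnonneg, hgh⟩ :=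
    hg.exists_shootingScales hA hκ hδ (by linarith)
  have hY : 0 < G.Y := h₀.Y_pos G
  obtain ⟨μ₀, hμ₀, htrain⟩ := (atTop_basis_Ioi' (0 : ℝ)).eventually_iff.1
    (Z.eventually_exists_humpTrain hH G)
  refine ⟨G.Y * δ / 2, G.R, μ₀, by positivity, ?_, ?_, fun μ hμ k S hS => ?_⟩
  · nlinarith [G.mul_le_R]
  · exact hμ₀
  · obtain ⟨c, Q⟩ := htrain hμ
    exact Z.exists_coded_solution Q
      ⟨fun p q => intervalIntegrable_weight (Z.intervalIntegrable p q), hlip, hzero, hnonneg⟩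
      hgh S hS

end SignPartition

end Solutions

section Nonlinearity

variable {g : ℝ → ℝ}

lemma exists_lipschitzOnWith_Icc_zero (hg : ContDiffOn ℝ 1 g (Ici 0)) (R : ℝ) :
    ∃ L, LipschitzOnWith L g (Icc 0 R) :=
  (hg.mono Icc_subset_Ici_self).exists_lipschitzOnWith one_ne_zero (convex_Icc 0 R) isCompact_Icc

lemma tendsto_div_of_hasDerivWithinAt {c : ℝ} (hg : HasDerivWithinAt g c (Ioi 0) 0)
    (hg0 : g 0 = 0) : Tendsto (fun v => g v / v) (nhdsWithin 0 (Ioi 0)) (nhds c) := by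
  have hslope := (hasDerivWithinAt_iff_tendsto_slope' self_notMem_Ioi).1 hg
  simpa [slope_fun_def_field, hg0] using hslope

lemma SuperlinearNonlinearity.of_contDiffOn (hg : ContDiffOn ℝ 1 g (Ici 0)) (hg0 : g 0 = 0)
    (hpos : ∀ v, 0 < v → 0 < g v) (hderiv : derivWithin g (Ici 0) 0 = 0)
    (htop : Tendsto (fun v => g v / v) atTop atTop) : SuperlinearNonlinearity g where
  lipschitz := exists_lipschitzOnWith_Icc_zero hg
  zero := hg0
  pos := hpos
  tendsto_zero := by
    have hg' := (hg.differentiableOn one_ne_zero 0 self_mem_Ici).hasDerivWithinAt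
    rw [hderiv] at hg'
    exact tendsto_div_of_hasDerivWithinAt (hg'.mono Ioi_subset_Ici_self) hg0
  tendsto_atTop := htop

end Nonlinearity

theorem stmt6_general {T : ℝ} (hT : 0 < T) {a : ℝ → ℝ} (haper : Function.Periodic a T)
    (haloc : LocallyIntegrable a volume) {m : ℕ} {σ : ℕ → ℝ} (hσ0 : σ 0 = 0)
    (hσT : σ (2 * m) = T) (hσmono : ∀ i < 2 * m, σ i < σ (i + 1))
    (hapos : ∀ i < m, PosOn a (Icc (σ (2 * i)) (σ (2 * i + 1))))
    (haneg : ∀ i < m, PosOn (fun t => -a t) (Icc (σ (2 * i + 1)) (σ (2 * i + 2))))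
    {g : ℝ → ℝ} (hg : SuperlinearNonlinearity g) :
    ∃ r R μ₀ : ℝ, 0 < r ∧ r < R ∧ 0 < μ₀ ∧ ∀ μ, μ₀ < μ → ∀ k : ℕ,
      (∀ S : ℕ → Bool, (∃ j < k * m, S j = true) →
        ∃ u, IsSol (fun t v => weight a μ t * g v) u ∧ (∀ t, 0 < u t) ∧
          Function.Periodic u (k * T) ∧ ∀ i < m, ∀ ℓ < k,
          (S (i + ℓ * m) = false →
            sSup (u '' Icc (σ (2 * i) + ℓ * T) (σ (2 * i + 1) + ℓ * T)) < r) ∧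
          (S (i + ℓ * m) = true →
            r < sSup (u '' Icc (σ (2 * i) + ℓ * T) (σ (2 * i + 1) + ℓ * T)) ∧
            sSup (u '' Icc (σ (2 * i) + ℓ * T) (σ (2 * i + 1) + ℓ * T)) < R)) ∧
      ∃ U : Finset (ℝ → ℝ), 2 ^ (k * m) - 1 ≤ U.card ∧
        ∀ u ∈ U, IsPositivePeriodicSol a g μ T k u := by
  have hm : m ≠ 0 := by
    rintro rfl
    exact hT.ne (hσ0.symm.trans hσT)
  obtain ⟨ρ, Z, hρ⟩ := exists_signPartition hm haloc haper (by rw [hσ0, hσT, zero_add]) hσmono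
    hapos haneg
  have hwindow (i : ℕ) (hi : i < m) (ℓ : ℕ) :
      Icc (ρ (2 * (i + ℓ * m) + 1)) (ρ (2 * (i + ℓ * m) + 2)) =
        Icc (σ (2 * i) + ℓ * T) (σ (2 * i + 1) + ℓ * T) := by
    rw [mul_add, add_right_comm, add_right_comm _ _ 2, Z.add_mul_period, Z.add_mul_period,
      hρ _ (by omega), hρ (2 * i + 1) (by omega)]
  obtain ⟨r, R, μ₀, hr, hrR, hμ₀, hsol⟩ := Z.exists_coded_solutions hg
  refine ⟨r, R, μ₀, hr, hrR, hμ₀, fun μ hμ k => ⟨fun S hS => ?_, ?_⟩⟩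
  · obtain ⟨u, ⟨hu, hpos, hper⟩, hcode⟩ := hsol μ hμ k S hS
    refine ⟨u, hu, hpos, hper, fun i hi ℓ hℓ => ?_⟩
    rw [← hwindow i hi ℓ]
    exact hcode _ (by nlinarith)
  · refine exists_finset_card_of_codes (r := r)
      (M := fun n u => sSup (u '' Icc (ρ (2 * n + 1)) (ρ (2 * n + 2)))) fun S hS => ?_
    obtain ⟨u, hu, hcode⟩ := hsol μ hμ k S hS
    exact ⟨u, hu, fun n hn => ⟨(hcode n hn).1, fun htrue => ((hcode n hn).2 htrue).1⟩⟩

/-- Theorem 4.1: for `μ` large, for every `k ≥ 2` and every non-null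
`km`-tuple of `0/1` symbols there is a positive `kT`-periodic solution of
`u'' + (a⁺ - μ a⁻) g(u) = 0` whose maximum on the positive hump `J⁺_{i,ℓ} = I⁺_i + ℓT`
is small (`< r`) or large (in `(r,R)`) according to the prescribed symbol; in particular
there are at least `2^{km} - 1` distinct positive `kT`-periodic solutions.
Here `I⁺_i = [σ(2i), σ(2i+1)]` (`0`-indexed) and the symbol attached to `(i,ℓ)` is
`S (i + ℓ m)`. -/
theorem stmt6 (T : ℝ) (hT : 0 < T) (a : ℝ → ℝ)
    (haper : Function.Periodic a T)
    (haloc : MeasureTheory.LocallyIntegrable a MeasureTheory.volume)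
    (m : ℕ) (hm : 1 ≤ m) (σ : ℕ → ℝ)
    (hσ0 : σ 0 = 0) (hσT : σ (2*m) = T) (hσmono : ∀ i < 2*m, σ i < σ (i+1))
    (hapos : ∀ i < m, PosOn a (Set.Icc (σ (2*i)) (σ (2*i+1))))
    (haneg : ∀ i < m, PosOn (fun t => - a t) (Set.Icc (σ (2*i+1)) (σ (2*i+2))))
    (g : ℝ → ℝ) (hgC1 : ContDiffOn ℝ 1 g (Set.Ici 0))
    (hg0 : g 0 = 0) (hgpos : ∀ s : ℝ, 0 < s → 0 < g s)
    (hg'0 : derivWithin g (Set.Ici 0) 0 = 0)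
    (hgsup : Filter.Tendsto (fun s => g s / s) Filter.atTop Filter.atTop) :
    ∃ r R μstar : ℝ, 0 < r ∧ r < R ∧ 0 < μstar ∧
      ∀ μ : ℝ, μstar < μ → ∀ k : ℕ, 2 ≤ k →
        (∀ S : ℕ → Bool, (∃ j < k * m, S j = true) →
          ∃ u : ℝ → ℝ,
            IsSol (fun t s => (max (a t) 0 - μ * max (-a t) 0) * g s) u ∧
            (∀ t, 0 < u t) ∧ Function.Periodic u ((k:ℝ) * T) ∧
            ∀ i < m, ∀ ℓ < k,
              (S (i + ℓ * m) = false →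
                sSup (u '' Set.Icc (σ (2*i) + (ℓ:ℝ) * T) (σ (2*i+1) + (ℓ:ℝ) * T)) < r) ∧
              (S (i + ℓ * m) = true →
                r < sSup (u '' Set.Icc (σ (2*i) + (ℓ:ℝ) * T) (σ (2*i+1) + (ℓ:ℝ) * T)) ∧
                sSup (u '' Set.Icc (σ (2*i) + (ℓ:ℝ) * T) (σ (2*i+1) + (ℓ:ℝ) * T)) < R)) ∧
        ∃ U : Finset (ℝ → ℝ), 2 ^ (k * m) - 1 ≤ U.card ∧
          ∀ u ∈ U,
            IsSol (fun t s => (max (a t) 0 - μ * max (-a t) 0) * g s) u ∧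
            (∀ t, 0 < u t) ∧ Function.Periodic u ((k:ℝ) * T) := by
  obtain ⟨r, R, μ₀, hr, hrR, hμ₀, hsol⟩ := stmt6_general hT haper haloc hσ0 hσT hσmono hapos haneg
    (.of_contDiffOn hgC1 hg0 hgpos hg'0 hgsup)
  exact ⟨r, R, μ₀, hr, hrR, hμ₀, fun μ hμ k _ => hsol μ hμ k⟩
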